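/- arXiv:1806.04901 — 3 statements merged into one kernel-verified Lean document; each statement's English description precedes it below -/
import Mathlib

section
/- Let N ≥ 2 and 1 < p < ∞, let ℝ^N_+ = { x = (x', x_N) ∈ ℝ^N : x_N > 0 }, and let d_H(x) = inf { H⁰(x − y) : y ∈ ℝ^N, y_N = 0 } be the anisotropic distance of x ∈ ℝ^N_+ to the boundary (a positive linear function of x_N, everywhere differentiable, with H(∇d_H) = 1). Then C_p(ℝ^N_+) := inf over nonzero u ∈ C_c^∞(ℝ^N_+) of [ ∫_{ℝ^N_+} |∇u(x) · (∇_ξ H)(∇d_H(x))|^p dx / ∫_{ℝ^N_+} |u(x)|^p / d_H(x)^p dx ] equals ((p−1)/p)^p. -/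
/-!
Let `l x = ⟪ν, x⟫ / H ν` be the linear function normalized by the norm of the normal vector `ν`,
and let `w = ∇H(ν)`. Euler's identity gives `l w = 1`, and subadditivity places `w` in the polar
unit ball; hence the anisotropic distance to the boundary is `l`, the direction `∇H(∇d_H)` is the
constant `w`, and the claim is the one-dimensional Hardy inequality along the lines in direction
`w`.

*Lower bound.* With `λ = (p - 1) / p`, the tangent-line inequality for `|·| ^ p` gives pointwise
`|∂_w u| ^ p - λ ^ p |u| ^ p / l ^ p ≥ λ ^ (p - 1) ∂_w (|u| ^ p l ^ (1 - p))`, and the right-hand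
side integrates to zero because `|u| ^ p l ^ (1 - p)` is `C¹` with compact support.

*Sharpness.* On the half-line, the substitution `g t = t ^ λ v (log t)` turns the Hardy quotient
into `∫ |λ v + v'| ^ p / ∫ |v| ^ p` over `ℝ`, which for `v s = χ (ε s)` tends to `λ ^ p` as
`ε → 0`. In the coordinates `x ↦ (l x, x - l x • w)` one multiplies `g` by a fixed bump function
on `ker l`, whose contribution cancels from the quotient by Fubini.
-/

open MeasureTheory Set Filter
open scoped RealInnerProductSpace Topology ENNReal NNReal

noncomputable section

/-- `ℝ^N` as a Euclidean space. -/
abbrev Euc (N : ℕ) := EuclideanSpace ℝ (Fin N)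

/-- `H : ℝ^N → ℝ` is a Finsler norm: nonnegative, convex, `C²` away from the origin,
even and positively one-homogeneous, comparable to the Euclidean norm, and with
positive definite Hessian of `H²` away from the origin. -/
structure IsFinslerNorm {N : ℕ} (H : Euc N → ℝ) : Prop where
  nonneg : ∀ ξ, 0 ≤ H ξ
  convexOn : ConvexOn ℝ Set.univ H
  smooth : ContDiffOn ℝ 2 H {(0 : Euc N)}ᶜ
  homog : ∀ (t : ℝ) (ξ : Euc N), H (t • ξ) = |t| * H ξ
  bounds : ∃ a b : ℝ, 0 < a ∧ a ≤ b ∧ ∀ ξ : Euc N, a * ‖ξ‖ ≤ H ξ ∧ H ξ ≤ b * ‖ξ‖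
  hessPosDef : ∀ ξ : Euc N, ξ ≠ 0 → ∀ v : Euc N, v ≠ 0 →
    0 < iteratedFDeriv ℝ 2 (fun x => (H x) ^ 2) ξ ![v, v]

/-- The polar function `H⁰(x) = sup_{ξ ≠ 0} (ξ·x)/H(ξ)` of a Finsler norm. -/
def polarNorm {N : ℕ} (H : Euc N → ℝ) (x : Euc N) : ℝ :=
  sSup {r : ℝ | ∃ ξ : Euc N, ξ ≠ 0 ∧ r = ⟪ξ, x⟫ / H ξ}

/-- `u ∈ C_c^∞(Ω)`: a smooth function with compact support contained in `Ω`. -/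
def IsTestFun {N : ℕ} (Ω : Set (Euc N)) (u : Euc N → ℝ) : Prop :=
  ContDiff ℝ (⊤ : ℕ∞) u ∧ HasCompactSupport u ∧ tsupport u ⊆ Ω

section Smoothness

variable {E : Type*} [NormedAddCommGroup E] [NormedSpace ℝ E]

lemma contDiff_of_forall_mem_tsupport {F : Type*} [NormedAddCommGroup F] [NormedSpace ℝ F]
    {n : WithTop ℕ∞} {f : E → F} (h : ∀ x ∈ tsupport f, ContDiffAt ℝ n f x) : ContDiff ℝ n f :=
  contMDiff_iff_contDiff.1 <| contMDiff_of_tsupport fun x hx => (h x hx).contMDiffAt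

lemma hasCompactSupport_abs_rpow {X : Type*} [TopologicalSpace X] {u : X → ℝ} {p : ℝ}
    (hu : HasCompactSupport u) (hp : p ≠ 0) : HasCompactSupport fun x => |u x| ^ p :=
  hu.comp_left (g := fun t : ℝ => |t| ^ p) (by simp [hp])

lemma hasCompactSupport_abs_rpow_div_rpow {X : Type*} [TopologicalSpace X] {u d : X → ℝ} {p : ℝ}
    (hu : HasCompactSupport u) (hp : p ≠ 0) : HasCompactSupport fun x => |u x| ^ p / d x ^ p := by
  simp only [div_eq_mul_inv]
  exact (hasCompactSupport_abs_rpow hu hp).mul_right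

lemma integral_abs_rpow_pos {X : Type*} [TopologicalSpace X] [MeasurableSpace X] [BorelSpace X]
    {μ : Measure X} [μ.IsOpenPosMeasure] [IsFiniteMeasureOnCompacts μ] {u : X → ℝ} {p : ℝ} {x : X}
    (hp : 0 < p) (hu : Continuous u) (hc : HasCompactSupport u) (hx : u x ≠ 0) :
    0 < ∫ y, |u y| ^ p ∂μ :=
  (hu.abs.rpow_const fun _ => .inr hp.le).integral_pos_of_hasCompactSupport_nonneg_nonzero
    (hasCompactSupport_abs_rpow hc hp.ne') (fun _ => by simp only [Pi.zero_apply]; positivity)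
    (Real.rpow_pos_of_pos (abs_pos.mpr hx) p).ne'

lemma contDiff_abs_rpow_mul {p : ℝ} (hp : 1 < p) {u φ : E → ℝ} (hu : ContDiff ℝ 1 u)
    (hφ : ∀ x ∈ tsupport u, ContDiffAt ℝ 1 φ x) : ContDiff ℝ 1 fun x => |u x| ^ p * φ x := by
  have hp₀ : p ≠ 0 := by linarith
  have hpow : ContDiff ℝ 1 fun x => |u x| ^ p := hu.norm_rpow hp
  refine contDiff_of_forall_mem_tsupport fun x hx => hpow.contDiffAt.mul (hφ x ?_)
  exact tsupport_comp_subset (g := fun t : ℝ => |t| ^ p) (by simp [hp₀]) u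
    (tsupport_mul_subset_left hx)

end Smoothness

section HardyInequality

lemma mul_rpow_sub_one_mul_le_abs_rpow_add {p c : ℝ} (hp : 1 < p) (hc : 0 ≤ c) (b : ℝ) :
    p * c ^ (p - 1) * b ≤ |b| ^ p + (p - 1) * c ^ p := by
  have hp₁ : 0 < p - 1 := by linarith
  have young := Real.young_inequality b (c ^ (p - 1)) (.conjExponent hp)
  have hpow : |c ^ (p - 1)| ^ p.conjExponent = c ^ p := by
    rw [abs_of_nonneg (by positivity), ← Real.rpow_mul hc, Real.conjExponent,
      mul_div_cancel₀ _ hp₁.ne']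
  rw [hpow, Real.conjExponent] at young
  field_simp at young
  linarith

/-- The left-hand side is a multiple of the derivative of `|u| ^ p * d ^ (1 - p)`, which integrates
to zero. -/
lemma hardy_pointwise {p d : ℝ} (hp : 1 < p) (hd : 0 < d) (a v : ℝ) :
    ((p - 1) / p) ^ (p - 1) *
        (p * |a| ^ (p - 2) * a * v * d ^ (1 - p) + |a| ^ p * ((1 - p) * d ^ (-p)))
      ≤ |v| ^ p - ((p - 1) / p) ^ p * (|a| ^ p / d ^ p) := by
  have hp₀ : 0 < p := by linarith
  have hp₁ : 0 < p - 1 := by linarith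
  rcases eq_or_ne a 0 with rfl | ha
  · simp only [abs_zero, Real.zero_rpow hp₀.ne', mul_zero, zero_mul, zero_div, add_zero, sub_zero]
    positivity
  have ha' : 0 < |a| := abs_pos.mpr ha
  set c := (p - 1) / p with hc
  have hc₀ : 0 < c := by positivity
  have hpc : p * c = p - 1 := by rw [hc]; field_simp
  have tangent := mul_rpow_sub_one_mul_le_abs_rpow_add hp (c := c * (|a| / d)) (by positivity)
    (a * v / |a|)
  have habs : abs (a * v / |a|) = |v| := by rw [abs_div, abs_mul, abs_abs]; field_simp
  rw [habs, Real.rpow_sub_one (by positivity), Real.mul_rpow hc₀.le (by positivity),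
    Real.div_rpow ha'.le hd.le, ← sub_le_iff_le_add] at tangent
  rw [le_sub_iff_add_le]
  refine le_trans (le_of_eq ?_) tangent
  rw [Real.rpow_sub_one hc₀.ne', Real.rpow_sub ha', Real.rpow_sub hd, Real.rpow_neg hd.le,
    Real.rpow_one, Real.rpow_two]
  clear_value c
  field_simp
  linear_combination |a| ^ 2 * hpc

variable {E : Type*} [NormedAddCommGroup E] [NormedSpace ℝ E] {p : ℝ} {u d : E → ℝ} {w : E}

lemma fderiv_abs_rpow_mul_rpow_apply {x : E} (hp : 1 < p) (hu : DifferentiableAt ℝ u x)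
    (hd : DifferentiableAt ℝ d x) (hx : 0 < d x) (q : ℝ) (w : E) :
    fderiv ℝ (fun y => |u y| ^ p * d y ^ q) x w =
      p * |u x| ^ (p - 2) * u x * fderiv ℝ u x w * d x ^ q +
        |u x| ^ p * (q * d x ^ (q - 1) * fderiv ℝ d x w) := by
  have hu' : HasFDerivAt (fun y => |u y| ^ p) ((p * |u x| ^ (p - 2) * u x) • fderiv ℝ u x) x :=
    (hasDerivAt_abs_rpow (u x) hp).comp_hasFDerivAt x hu.hasFDerivAt
  have hd' : HasFDerivAt (fun y => d y ^ q) ((q * d x ^ (q - 1)) • fderiv ℝ d x) x :=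
    (Real.hasDerivAt_rpow_const (.inl hx.ne')).comp_hasFDerivAt x hd.hasFDerivAt
  rw [(hu'.fun_mul hd').fderiv]
  simp only [add_apply, smul_apply, smul_eq_mul]
  ring

lemma hardy_pointwise_fderiv (hp : 1 < p) (hu : ContDiff ℝ 1 u) (hd : ContDiff ℝ 1 d)
    (hpos : ∀ x ∈ tsupport u, 0 < d x) (hdw : ∀ x ∈ tsupport u, fderiv ℝ d x w = 1) (x : E) :
    ((p - 1) / p) ^ (p - 1) * fderiv ℝ (fun y => |u y| ^ p * d y ^ (1 - p)) x w ≤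
      |fderiv ℝ u x w| ^ p - ((p - 1) / p) ^ p * (|u x| ^ p / d x ^ p) := by
  have hp₀ : p ≠ 0 := by linarith
  by_cases hx : x ∈ tsupport u
  · rw [fderiv_abs_rpow_mul_rpow_apply hp (hu.differentiable one_ne_zero x)
      (hd.differentiable one_ne_zero x) (hpos x hx), hdw x hx, mul_one, sub_sub_cancel_left]
    exact hardy_pointwise hp (hpos x hx) _ _
  · have hu₀ : u =ᶠ[𝓝 x] fun _ => 0 := notMem_tsupport_iff_eventuallyEq.mp hx
    have hf₀ : (fun y => |u y| ^ p * d y ^ (1 - p)) =ᶠ[𝓝 x] fun _ => 0 :=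
      hu₀.mono fun y hy => by simp [hy, hp₀]
    simp [hf₀.fderiv_eq, hu₀.fderiv_eq, hu₀.eq_of_nhds, hp₀]

lemma contDiff_abs_rpow_div_rpow (hp : 1 < p) (hu : ContDiff ℝ 1 u) (hd : ContDiff ℝ 1 d)
    (hpos : ∀ x ∈ tsupport u, 0 < d x) : ContDiff ℝ 1 fun x => |u x| ^ p / d x ^ p := by
  simp only [div_eq_mul_inv]
  exact contDiff_abs_rpow_mul hp hu fun x hx =>
    (hd.contDiffAt.rpow_const_of_ne (hpos x hx).ne').inv (Real.rpow_pos_of_pos (hpos x hx) p).ne'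

variable [MeasurableSpace E] [BorelSpace E] {μ : Measure E} [μ.IsAddHaarMeasure]

lemma integral_abs_rpow_div_rpow_pos (hp : 1 < p) (hu : ContDiff ℝ 1 u) (hc : HasCompactSupport u)
    (hd : ContDiff ℝ 1 d) (hpos : ∀ x ∈ tsupport u, 0 < d x) (hu₀ : u ≠ 0) :
    0 < ∫ x, |u x| ^ p / d x ^ p ∂μ := by
  have hp₀ : p ≠ 0 := by linarith
  obtain ⟨x, hx⟩ := Function.ne_iff.mp hu₀
  refine (contDiff_abs_rpow_div_rpow hp hu hd
    hpos).continuous.integral_pos_of_hasCompactSupport_nonneg_nonzero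
    (hasCompactSupport_abs_rpow_div_rpow hc hp₀) (fun y => ?_) (x := x) ?_
  · by_cases hy : y ∈ tsupport u
    · have := hpos y hy
      simp only [Pi.zero_apply]
      positivity
    · simp [image_eq_zero_of_notMem_tsupport hy, hp₀]
  · have := hpos x (subset_tsupport u hx)
    have := abs_pos.mpr hx
    positivity

variable [FiniteDimensional ℝ E]

lemma integral_fderiv_apply_eq_zero {f : E → ℝ} (hf : ContDiff ℝ 1 f) (hc : HasCompactSupport f)
    (w : E) : ∫ x, fderiv ℝ f x w ∂μ = 0 := by
  have hf' : Integrable (fun x => fderiv ℝ f x w) μ :=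
    ((hf.continuous_fderiv one_ne_zero).clm_apply continuous_const).integrable_of_hasCompactSupport
      (hc.fderiv_apply ℝ w)
  simpa using integral_mul_fderiv_eq_neg_fderiv_mul_of_integrable (μ := μ) (f := fun _ => (1 : ℝ))
    (g := f) (v := w) (by simp) (by simpa using hf')
    (by simpa using hf.continuous.integrable_of_hasCompactSupport hc)
    (fun _ _ => differentiableAt_const _) (fun x _ => hf.differentiable one_ne_zero x)

theorem hardy_inequality (hp : 1 < p) (hu : ContDiff ℝ 1 u) (hc : HasCompactSupport u)
    (hd : ContDiff ℝ 1 d) (hpos : ∀ x ∈ tsupport u, 0 < d x)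
    (hdw : ∀ x ∈ tsupport u, fderiv ℝ d x w = 1) :
    ((p - 1) / p) ^ p * ∫ x, |u x| ^ p / d x ^ p ∂μ ≤ ∫ x, |fderiv ℝ u x w| ^ p ∂μ := by
  have hp₀ : p ≠ 0 := by linarith
  have hf : ContDiff ℝ 1 fun x => |u x| ^ p * d x ^ (1 - p) :=
    contDiff_abs_rpow_mul hp hu fun x hx => hd.contDiffAt.rpow_const_of_ne (hpos x hx).ne'
  have hfc : HasCompactSupport fun x => |u x| ^ p * d x ^ (1 - p) :=
    (hasCompactSupport_abs_rpow hc hp₀).mul_right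
  have hf_int : Integrable (fun x => fderiv ℝ (fun y => |u y| ^ p * d y ^ (1 - p)) x w) μ :=
    ((hf.continuous_fderiv one_ne_zero).clm_apply continuous_const).integrable_of_hasCompactSupport
      (hfc.fderiv_apply ℝ w)
  have hu_int : Integrable (fun x => |u x| ^ p / d x ^ p) μ :=
    (contDiff_abs_rpow_div_rpow hp hu hd hpos).continuous.integrable_of_hasCompactSupport
      (hasCompactSupport_abs_rpow_div_rpow hc hp₀)
  have hu'_int : Integrable (fun x => |fderiv ℝ u x w| ^ p) μ :=
    (((hu.continuous_fderiv one_ne_zero).clm_apply continuous_const).abs.rpow_const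
      fun _ => .inr (by linarith)).integrable_of_hasCompactSupport
      (hasCompactSupport_abs_rpow (hc.fderiv_apply ℝ w) hp₀)
  have key := integral_mono (hf_int.const_mul _) (hu'_int.sub (hu_int.const_mul _))
    (hardy_pointwise_fderiv hp hu hd hpos hdw)
  simp only [Pi.sub_apply] at key
  rw [integral_const_mul, integral_fderiv_apply_eq_zero hf hfc, mul_zero,
    integral_sub hu'_int (hu_int.const_mul _), integral_const_mul] at key
  exact sub_nonneg.mp key

end HardyInequality

section EmdenFowler

variable {lam p : ℝ} {v : ℝ → ℝ} {t : ℝ}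

/-- The Emden–Fowler change of variables `t = exp s`: the function `t ↦ t ^ lam * v (log t)` on the
half-line `t > 0`, extended by zero. For `lam = (p - 1) / p` it turns the Hardy quotient of the
half-line into a translation-invariant one. -/
def emdenFowler (lam : ℝ) (v : ℝ → ℝ) (t : ℝ) : ℝ :=
  if 0 < t then t ^ lam * v (Real.log t) else 0

lemma emdenFowler_of_pos (ht : 0 < t) : emdenFowler lam v t = t ^ lam * v (Real.log t) :=
  if_pos ht

lemma emdenFowler_eventuallyEq (ht : 0 < t) :
    emdenFowler lam v =ᶠ[𝓝 t] fun t => t ^ lam * v (Real.log t) :=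
  (eventually_gt_nhds ht).mono fun _ => emdenFowler_of_pos

lemma tsupport_emdenFowler_subset (hv : HasCompactSupport v) :
    tsupport (emdenFowler lam v) ⊆ Real.exp '' tsupport v := by
  refine closure_minimal (fun t ht => ?_) (hv.image Real.continuous_exp).isClosed
  have ht₀ : 0 < t := by
    by_contra h
    exact ht (if_neg h)
  rw [Function.mem_support, emdenFowler_of_pos ht₀] at ht
  exact ⟨Real.log t, subset_tsupport v (right_ne_zero_of_mul ht), Real.exp_log ht₀⟩

lemma tsupport_emdenFowler_subset_Ioi (hv : HasCompactSupport v) :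
    tsupport (emdenFowler lam v) ⊆ Ioi 0 :=
  (tsupport_emdenFowler_subset hv).trans (image_subset_iff.mpr fun s _ => Real.exp_pos s)

lemma hasCompactSupport_emdenFowler (hv : HasCompactSupport v) :
    HasCompactSupport (emdenFowler lam v) :=
  (hv.image Real.continuous_exp).of_isClosed_subset (isClosed_tsupport _)
    (tsupport_emdenFowler_subset hv)

lemma contDiff_emdenFowler {n : WithTop ℕ∞} (hv : ContDiff ℝ n v) (hc : HasCompactSupport v) :
    ContDiff ℝ n (emdenFowler lam v) := by
  refine contDiff_of_forall_mem_tsupport fun t ht => ?_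
  have ht₀ : 0 < t := tsupport_emdenFowler_subset_Ioi hc ht
  refine ContDiffAt.congr_of_eventuallyEq ?_ (emdenFowler_eventuallyEq ht₀)
  exact (contDiffAt_id.rpow_const_of_ne ht₀.ne').mul
    (hv.contDiffAt.comp t (contDiffAt_id.log ht₀.ne'))

lemma deriv_emdenFowler (hv : Differentiable ℝ v) (ht : 0 < t) :
    deriv (emdenFowler lam v) t =
      t ^ (lam - 1) * (lam * v (Real.log t) + deriv v (Real.log t)) := by
  have hderiv := (Real.hasDerivAt_rpow_const (p := lam) (.inl ht.ne')).fun_mul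
    ((hv (Real.log t)).hasDerivAt.comp t (Real.hasDerivAt_log ht.ne'))
  rw [(emdenFowler_eventuallyEq ht).deriv_eq]
  refine hderiv.deriv.trans ?_
  rw [Function.comp_apply, Real.rpow_sub_one ht.ne']
  field_simp

lemma setIntegral_Ioi_zero_eq_integral_exp_mul (f : ℝ → ℝ) :
    ∫ t in Ioi 0, f t = ∫ s, Real.exp s * f (Real.exp s) := by
  have h := integral_image_eq_integral_abs_deriv_smul MeasurableSet.univ
    (fun s _ => (Real.hasDerivAt_exp s).hasDerivWithinAt) Real.exp_injective.injOn f
  simpa only [image_univ, Real.range_exp, Real.abs_exp, smul_eq_mul, Measure.restrict_univ] using h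

/-- With the exponent `lam = (p - 1) / p`, the weight `(t ^ (lam - 1)) ^ p dt` is the Haar measure
`dt / t` of the multiplicative half-line. -/
lemma integral_abs_rpow_of_eq_rpow_mul_comp_log (hp : p ≠ 0) {f a : ℝ → ℝ}
    (hf₀ : ∀ t ≤ 0, f t = 0) (hf : ∀ t, 0 < t → f t = t ^ ((p - 1) / p - 1) * a (Real.log t)) :
    ∫ t, |f t| ^ p = ∫ s, |a s| ^ p := by
  rw [← setIntegral_eq_integral_of_forall_compl_eq_zero (s := Ioi 0)
    fun t ht => by simp [hf₀ t (not_lt.mp ht), hp], setIntegral_Ioi_zero_eq_integral_exp_mul]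
  congr with s
  rw [hf _ (Real.exp_pos s), Real.log_exp, abs_mul, abs_of_pos (by positivity),
    Real.mul_rpow (by positivity) (abs_nonneg _), ← Real.rpow_mul (Real.exp_pos s).le,
    show ((p - 1) / p - 1) * p = -1 by field_simp; ring, Real.rpow_neg_one,
    mul_inv_cancel_left₀ (Real.exp_ne_zero s)]

lemma integral_abs_deriv_emdenFowler_rpow (hp : p ≠ 0) (hv : Differentiable ℝ v)
    (hc : HasCompactSupport v) :
    ∫ t, |deriv (emdenFowler ((p - 1) / p) v) t| ^ p =
      ∫ s, |(p - 1) / p * v s + deriv v s| ^ p :=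
  integral_abs_rpow_of_eq_rpow_mul_comp_log (a := fun s => (p - 1) / p * v s + deriv v s) hp
    (fun _ ht => image_eq_zero_of_notMem_tsupport fun h =>
      ht.not_gt (tsupport_emdenFowler_subset_Ioi hc (tsupport_deriv_subset h)))
    fun _ ht => deriv_emdenFowler hv ht

lemma integral_abs_emdenFowler_rpow_div_rpow (hp : p ≠ 0) :
    ∫ t, |emdenFowler ((p - 1) / p) v t| ^ p / t ^ p = ∫ s, |v s| ^ p := by
  rw [← integral_abs_rpow_of_eq_rpow_mul_comp_log hp
    (f := fun t => emdenFowler ((p - 1) / p) v t / t) (a := v)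
    (fun t ht => by simp [emdenFowler, ht.not_gt])
    fun t ht => by rw [emdenFowler_of_pos ht, Real.rpow_sub_one ht.ne', div_mul_eq_mul_div]]
  congr with t
  rcases le_or_gt t 0 with ht | ht
  · simp [emdenFowler, ht.not_gt, hp]
  · rw [abs_div, abs_of_pos ht, Real.div_rpow (abs_nonneg _) ht.le]

end EmdenFowler

section OneDimensionalSharpness

variable {lam p r : ℝ}

lemma continuous_integral_abs_add_mul_rpow (hp : 0 < p) {a b : ℝ → ℝ} (ha : Continuous a)
    (hb : Continuous b) (hac : HasCompactSupport a) (hbc : HasCompactSupport b) :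
    Continuous fun ε : ℝ => ∫ s, |a s + ε * b s| ^ p := by
  have hset : Continuous fun ε : ℝ => ∫ s in tsupport a ∪ tsupport b, |a s + ε * b s| ^ p := by
    refine continuous_parametric_integral_of_continuous ?_ (hac.union hbc)
    simp only [Function.uncurry_def]
    exact ((ha.comp continuous_snd).add
      (continuous_fst.mul (hb.comp continuous_snd))).abs.rpow_const fun _ => .inr hp.le
  convert hset using 2 with ε
  refine (setIntegral_eq_integral_of_forall_compl_eq_zero fun s hs => ?_).symm
  simp [image_eq_zero_of_notMem_tsupport fun h => hs (.inl h),
    image_eq_zero_of_notMem_tsupport fun h => hs (.inr h), hp.ne']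

lemma integral_abs_mul_comp_mul_add_deriv_rpow (χ : ℝ → ℝ) {ε : ℝ} (hε : 0 < ε) :
    ∫ s, |lam * χ (ε * s) + deriv (fun s => χ (ε * s)) s| ^ p =
      ε⁻¹ * ∫ s, |lam * χ s + ε * deriv χ s| ^ p := by
  have h := Measure.integral_comp_mul_left (fun s => |lam * χ s + ε * deriv χ s| ^ p) ε
  rw [abs_of_pos (inv_pos.mpr hε), smul_eq_mul] at h
  simpa only [deriv_comp_mul_left, smul_eq_mul] using h

/-- The minimizing sequence is `χ (ε s)` with `ε → 0`: it makes the derivative negligible. -/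
lemma exists_integral_abs_mul_add_deriv_rpow_lt (hp : 0 < p) (hr : |lam| ^ p < r) :
    ∃ v : ℝ → ℝ, ContDiff ℝ (⊤ : ℕ∞) v ∧ HasCompactSupport v ∧
      ∫ s, |lam * v s + deriv v s| ^ p < r * ∫ s, |v s| ^ p := by
  let χ : ContDiffBump (0 : ℝ) := ⟨1, 2, one_pos, one_lt_two⟩
  have hχ : ContDiff ℝ (⊤ : ℕ∞) χ := χ.contDiff
  have hχ_pos : 0 < ∫ s, |χ s| ^ p := integral_abs_rpow_pos hp χ.continuous χ.hasCompactSupport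
    (x := 0) (by simp [χ.one_of_mem_closedBall (Metric.mem_closedBall_self one_pos.le)])
  have hcont := continuous_integral_abs_add_mul_rpow hp (continuous_const.mul χ.continuous)
    (hχ.continuous_deriv (by simp)) (χ.hasCompactSupport.mul_left (f := fun _ => lam))
    χ.hasCompactSupport.deriv
  have hlim : ∫ s, |lam * χ s + 0 * deriv χ s| ^ p < r * ∫ s, |χ s| ^ p := by
    simp only [zero_mul, add_zero, abs_mul, Real.mul_rpow (abs_nonneg _) (abs_nonneg _),
      integral_const_mul]
    gcongr
  obtain ⟨ε, hlt, hε⟩ := (((hcont.tendsto 0).eventually_lt_const hlim).filter_mono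
    nhdsWithin_le_nhds |>.and self_mem_nhdsWithin).exists (f := 𝓝[>] 0)
  refine ⟨fun s => χ (ε * s), hχ.comp (contDiff_const.mul contDiff_id),
    χ.hasCompactSupport.comp_homeomorph (Homeomorph.mulLeft₀ ε (ne_of_gt hε)), ?_⟩
  rw [integral_abs_mul_comp_mul_add_deriv_rpow χ hε,
    Measure.integral_comp_mul_left (fun s => |χ s| ^ p), abs_of_pos (inv_pos.mpr hε), smul_eq_mul,
    mul_left_comm]
  exact mul_lt_mul_of_pos_left hlt (inv_pos.mpr hε)

theorem exists_integral_abs_deriv_rpow_lt (hp : 0 < p) (hr : |(p - 1) / p| ^ p < r) :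
    ∃ g : ℝ → ℝ, ContDiff ℝ (⊤ : ℕ∞) g ∧ HasCompactSupport g ∧ tsupport g ⊆ Ioi 0 ∧
      ∫ t, |deriv g t| ^ p < r * ∫ t, |g t| ^ p / t ^ p := by
  obtain ⟨v, hv, hc, hlt⟩ := exists_integral_abs_mul_add_deriv_rpow_lt hp hr
  refine ⟨emdenFowler ((p - 1) / p) v, contDiff_emdenFowler hv hc,
    hasCompactSupport_emdenFowler hc, tsupport_emdenFowler_subset_Ioi hc, ?_⟩
  rwa [integral_abs_deriv_emdenFowler_rpow hp.ne' (hv.differentiable (by simp)) hc,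
    integral_abs_emdenFowler_rpow_div_rpow hp.ne']

end OneDimensionalSharpness

section Sharpness

lemma tsupport_fst_mul_snd_subset {X Y : Type*} [TopologicalSpace X] [TopologicalSpace Y]
    (g : X → ℝ) (ψ : Y → ℝ) :
    tsupport (fun z : X × Y => g z.1 * ψ z.2) ⊆ tsupport g ×ˢ tsupport ψ :=
  closure_minimal (fun _ hz => ⟨subset_tsupport g (left_ne_zero_of_mul hz),
    subset_tsupport ψ (right_ne_zero_of_mul hz)⟩) ((isClosed_tsupport g).prod (isClosed_tsupport ψ))

lemma fderiv_fst_mul_snd_apply {F : Type*} [NormedAddCommGroup F] [NormedSpace ℝ F] {g : ℝ → ℝ}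
    {ψ : F → ℝ} {z : ℝ × F} (hg : DifferentiableAt ℝ g z.1) (hψ : DifferentiableAt ℝ ψ z.2) :
    fderiv ℝ (fun z : ℝ × F => g z.1 * ψ z.2) z (1, 0) = deriv g z.1 * ψ z.2 := by
  have hg' := hg.hasDerivAt.comp_hasFDerivAt z (hasFDerivAt_fst (𝕜 := ℝ) (F := F))
  have hψ' := hψ.hasFDerivAt.comp z hasFDerivAt_snd
  refine (DFunLike.congr_fun (hg'.mul hψ').fderiv (1, 0)).trans ?_
  simp [mul_comm]

variable {p r : ℝ}

lemma exists_integral_prod_abs_fderiv_rpow_lt {F : Type*} [NormedAddCommGroup F] [NormedSpace ℝ F]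
    [FiniteDimensional ℝ F] [MeasurableSpace F] [BorelSpace F] (ν : Measure F)
    [ν.IsAddHaarMeasure] (hp : 0 < p) (hr : |(p - 1) / p| ^ p < r) :
    ∃ u : ℝ × F → ℝ, ContDiff ℝ (⊤ : ℕ∞) u ∧ HasCompactSupport u ∧ tsupport u ⊆ {z | 0 < z.1} ∧
      ∫ z, |fderiv ℝ u z (1, 0)| ^ p ∂volume.prod ν <
        r * ∫ z, |u z| ^ p / z.1 ^ p ∂volume.prod ν := by
  obtain ⟨g, hg, hgc, hg_pos, hlt⟩ := exists_integral_abs_deriv_rpow_lt hp hr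
  let ψ : ContDiffBump (0 : F) := ⟨1, 2, one_pos, one_lt_two⟩
  have hψ : ContDiff ℝ (⊤ : ℕ∞) ψ := ψ.contDiff
  have hψ_pos : 0 < ∫ y, |ψ y| ^ p ∂ν := integral_abs_rpow_pos hp ψ.continuous ψ.hasCompactSupport
    (x := 0) (by simp [ψ.one_of_mem_closedBall (Metric.mem_closedBall_self one_pos.le)])
  have hsupp := tsupport_fst_mul_snd_subset g ψ
  refine ⟨fun z => g z.1 * ψ z.2, (hg.comp contDiff_fst).mul (hψ.comp contDiff_snd),
    (hgc.prod ψ.hasCompactSupport).of_isClosed_subset (isClosed_tsupport _) hsupp,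
    fun z hz => hg_pos (hsupp hz).1, ?_⟩
  have hnum : ∀ z : ℝ × F, |fderiv ℝ (fun z : ℝ × F => g z.1 * ψ z.2) z (1, 0)| ^ p =
      |deriv g z.1| ^ p * |ψ z.2| ^ p := fun z => by
    rw [fderiv_fst_mul_snd_apply (hg.differentiable (by simp) _) (hψ.differentiable (by simp) _),
      abs_mul, Real.mul_rpow (abs_nonneg _) (abs_nonneg _)]
  have hden : ∀ z : ℝ × F, |g z.1 * ψ z.2| ^ p / z.1 ^ p =
      |g z.1| ^ p / z.1 ^ p * |ψ z.2| ^ p := fun z => by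
    rw [abs_mul, Real.mul_rpow (abs_nonneg _) (abs_nonneg _), mul_div_right_comm]
  simp only [hnum, hden]
  rw [integral_prod_mul (fun t => |deriv g t| ^ p) fun y => |ψ y| ^ p,
    integral_prod_mul (fun t => |g t| ^ p / t ^ p) fun y => |ψ y| ^ p, ← mul_assoc]
  exact mul_lt_mul_of_pos_right hlt hψ_pos

variable {E : Type*} [NormedAddCommGroup E] [NormedSpace ℝ E] [MeasurableSpace E]
  [BorelSpace E] (μ : Measure E) [μ.IsAddHaarMeasure]

lemma exists_pos_integral_comp_continuousLinearEquiv_eq_mul {F : Type*} [NormedAddCommGroup F]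
    [NormedSpace ℝ F] [FiniteDimensional ℝ F] [MeasurableSpace F] [BorelSpace F] (ν : Measure F)
    [ν.IsAddHaarMeasure] (L : E ≃L[ℝ] F) :
    ∃ c : ℝ, 0 < c ∧ ∀ f : F → ℝ, ∫ x, f (L x) ∂μ = c * ∫ y, f y ∂ν := by
  have := L.isAddHaarMeasure_map μ
  refine ⟨(μ.map L).addHaarScalarFactor ν, NNReal.coe_pos.mpr
    (Measure.addHaarScalarFactor_pos_of_isAddHaarMeasure _ _), fun f => ?_⟩
  refine (L.toHomeomorph.measurableEmbedding.integral_map f).symm.trans ?_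
  change ∫ y, f y ∂μ.map L = _
  conv_lhs => rw [Measure.isAddLeftInvariant_eq_smul (μ.map L) ν, integral_smul_nnreal_measure]
  rfl

theorem exists_integral_abs_fderiv_rpow_lt [FiniteDimensional ℝ E] {l : E →L[ℝ] ℝ} {w : E}
    (hw : l w = 1) (hp : 0 < p) (hr : |(p - 1) / p| ^ p < r) :
    ∃ u : E → ℝ, ContDiff ℝ (⊤ : ℕ∞) u ∧ HasCompactSupport u ∧ tsupport u ⊆ {x | 0 < l x} ∧
      ∫ x, |fderiv ℝ u x w| ^ p ∂μ < r * ∫ x, |u x| ^ p / l x ^ p ∂μ := by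
  let L := ContinuousLinearEquiv.equivOfRightInverse l (.toSpanSingleton ℝ w)
    fun a => by simp [hw]
  have hL : ∀ x, (L x).1 = l x := fun _ => rfl
  have hLw : L w = (1, 0) := by ext <;> simp [L, hw]
  obtain ⟨u, hu, hc, hpos, hlt⟩ :=
    exists_integral_prod_abs_fderiv_rpow_lt (Measure.addHaar (G := l.ker)) hp hr
  obtain ⟨c, hc_pos, hint⟩ := exists_pos_integral_comp_continuousLinearEquiv_eq_mul μ
    (volume.prod (Measure.addHaar (G := l.ker))) L
  refine ⟨u ∘ L, hu.comp L.contDiff, hc.comp_homeomorph L.toHomeomorph,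
    fun x hx => hpos (tsupport_comp_subset_preimage u L.continuous hx), ?_⟩
  simp only [L.comp_right_fderiv, ContinuousLinearMap.comp_apply, ContinuousLinearEquiv.coe_coe,
    hLw, Function.comp_apply, ← hL]
  rw [hint fun z => |fderiv ℝ u z (1, 0)| ^ p, hint fun z => |u z| ^ p / z.1 ^ p, mul_left_comm]
  exact mul_lt_mul_of_pos_left hlt hc_pos

theorem isGLB_hardy_quotient [FiniteDimensional ℝ E] {l : E →L[ℝ] ℝ} {w : E}
    (hw : l w = 1) (hp : 1 < p) :
    IsGLB {r : ℝ | ∃ u : E → ℝ, (ContDiff ℝ (⊤ : ℕ∞) u ∧ HasCompactSupport u ∧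
        tsupport u ⊆ {x | 0 < l x}) ∧ u ≠ 0 ∧
        r = (∫ x, |fderiv ℝ u x w| ^ p ∂μ) / ∫ x, |u x| ^ p / l x ^ p ∂μ}
      (((p - 1) / p) ^ p) := by
  have hp₀ : 0 < p := by linarith
  have hden : ∀ {u : E → ℝ}, ContDiff ℝ (⊤ : ℕ∞) u → HasCompactSupport u →
      tsupport u ⊆ {x | 0 < l x} → u ≠ 0 → 0 < ∫ x, |u x| ^ p / l x ^ p ∂μ :=
    fun hu hc hpos hu₀ =>
      integral_abs_rpow_div_rpow_pos hp (hu.of_le (by simp)) hc l.contDiff hpos hu₀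
  constructor
  · rintro _ ⟨u, ⟨hu, hc, hpos⟩, hu₀, rfl⟩
    rw [le_div_iff₀ (hden hu hc hpos hu₀)]
    exact hardy_inequality hp (hu.of_le (by simp)) hc l.contDiff hpos fun x _ => by simp [hw]
  · refine fun b hb => le_of_forall_gt_imp_ge_of_dense fun r hr => ?_
    have habs : |(p - 1) / p| = (p - 1) / p := abs_of_nonneg (by have := hp.le; bound)
    obtain ⟨u, hu, hc, hpos, hlt⟩ :=
      exists_integral_abs_fderiv_rpow_lt μ hw hp₀ (habs.symm ▸ hr)
    have hu₀ : u ≠ 0 := by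
      rintro rfl
      simp [hp₀.ne'] at hlt
    exact (hb ⟨u, ⟨hu, hc, hpos⟩, hu₀, rfl⟩).trans
      ((div_lt_iff₀ (hden hu hc hpos hu₀)).mpr hlt).le

end Sharpness

section AsymmetricNorm

/-- An asymmetric norm on a real vector space: a norm that need only be homogeneous under
multiplication by positive scalars. This is the structure under which the anisotropic distance to a
hyperplane is computed below. That `H 0 = 0` follows from homogeneity, hence is not a field. -/
structure IsAsymmNorm {E : Type*} [AddCommGroup E] [Module ℝ E] (H : E → ℝ) : Prop where
  pos : ∀ ξ, ξ ≠ 0 → 0 < H ξ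
  map_smul_of_pos : ∀ (t : ℝ) (ξ : E), 0 < t → H (t • ξ) = t * H ξ
  add_le : ∀ ξ η, H (ξ + η) ≤ H ξ + H η

namespace IsAsymmNorm

section Module

variable {E : Type*} [AddCommGroup E] [Module ℝ E] {H : E → ℝ}

lemma map_zero (hH : IsAsymmNorm H) : H 0 = 0 := by
  have h := hH.map_smul_of_pos 2 0 two_pos
  rw [smul_zero] at h
  linarith

lemma convexOn (hH : IsAsymmNorm H) : ConvexOn ℝ univ H :=
  convexOn_iff_forall_pos.mpr ⟨convex_univ, fun ξ _ η _ a b ha hb _ => by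
    simpa [hH.map_smul_of_pos, ha, hb] using hH.add_le (a • ξ) (b • η)⟩

end Module

section Derivative

variable {E : Type*} [NormedAddCommGroup E] [NormedSpace ℝ E] {H : E → ℝ} {ξ : E}

lemma exists_pos_mul_norm_le [FiniteDimensional ℝ E] (hH : IsAsymmNorm H) :
    ∃ a > 0, ∀ ξ, a * ‖ξ‖ ≤ H ξ := by
  have hcont : ContinuousOn H (Metric.sphere 0 1) :=
    (hH.convexOn.continuousOn isOpen_univ).mono (subset_univ _)
  obtain ⟨a, ha, hle⟩ := (isCompact_sphere (0 : E) 1).exists_forall_le' hcont (a := 0)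
    fun ξ hξ => hH.pos ξ (Metric.ne_of_mem_sphere hξ one_ne_zero)
  refine ⟨a, ha, fun ξ => ?_⟩
  rcases eq_or_ne ξ 0 with rfl | hξ
  · simp [hH.map_zero]
  · have hξ' : 0 < ‖ξ‖ := norm_pos_iff.mpr hξ
    have h := hle (‖ξ‖⁻¹ • ξ) (by simp [norm_smul, hξ'.ne'])
    rwa [hH.map_smul_of_pos _ _ (inv_pos.mpr hξ'), le_inv_mul_iff₀ hξ', mul_comm] at h

lemma fderiv_apply_self (hH : IsAsymmNorm H) (hξ : DifferentiableAt ℝ H ξ) :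
    fderiv ℝ H ξ ξ = H ξ := by
  have hray : HasDerivAt (fun t : ℝ => t • ξ) ξ 1 := by
    simpa using (hasDerivAt_id (1 : ℝ)).smul_const ξ
  have hcomp : HasDerivAt (fun t : ℝ => H (t • ξ)) (fderiv ℝ H ξ ξ) 1 :=
    HasFDerivAt.comp_hasDerivAt 1 (by simpa using hξ.hasFDerivAt) hray
  refine hcomp.unique ((hasDerivAt_mul_const (H ξ)).congr_of_eventuallyEq ?_)
  filter_upwards [lt_mem_nhds one_pos] with t ht using hH.map_smul_of_pos t ξ ht

lemma fderiv_apply_le (hH : IsAsymmNorm H) (hξ : DifferentiableAt ℝ H ξ) (v : E) :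
    fderiv ℝ H ξ v ≤ H v := by
  refine le_of_tendsto (hξ.hasFDerivAt.hasLineDerivAt v).tendsto_slope_zero_right ?_
  filter_upwards [self_mem_nhdsWithin] with t (ht : 0 < t)
  have h := hH.add_le ξ (t • v)
  rw [hH.map_smul_of_pos t v ht] at h
  rw [smul_eq_mul, inv_mul_le_iff₀ ht]
  linarith

lemma fderiv_smul (hH : IsAsymmNorm H) {t : ℝ} (ht : 0 < t) (ξ : E) :
    fderiv ℝ H (t • ξ) = fderiv ℝ H ξ := by
  have hhom : (H <| t • ·) = t • H := funext fun η => hH.map_smul_of_pos t η ht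
  have h := fderiv_comp_smul (𝕜 := ℝ) (f := H) (x := ξ) t
  rw [hhom, fderiv_const_smul_field] at h
  exact (smul_right_injective _ ht.ne' h).symm

end Derivative

section PolarNorm

variable {N : ℕ} {H : Euc N → ℝ} {ν : Euc N}

lemma inner_le_polarNorm_mul (hH : IsAsymmNorm H) (ξ x : Euc N) :
    ⟪ξ, x⟫ ≤ polarNorm H x * H ξ := by
  rcases eq_or_ne ξ 0 with rfl | hξ
  · simp [hH.map_zero]
  obtain ⟨a, ha, hle⟩ := hH.exists_pos_mul_norm_le
  refine (div_le_iff₀ (hH.pos ξ hξ)).mp (le_csSup ⟨‖x‖ / a, ?_⟩ ⟨ξ, hξ, rfl⟩)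
  rintro _ ⟨η, hη, rfl⟩
  rw [div_le_div_iff₀ (hH.pos η hη) ha]
  calc ⟪η, x⟫ * a ≤ ‖η‖ * ‖x‖ * a := by gcongr; exact real_inner_le_norm η x
    _ = ‖x‖ * (a * ‖η‖) := by ring
    _ ≤ ‖x‖ * H η := by gcongr; exact hle η

lemma polarNorm_le (hH : IsAsymmNorm H) {x : Euc N} {c : ℝ} (hc : 0 ≤ c)
    (h : ∀ ξ, ⟪ξ, x⟫ ≤ c * H ξ) : polarNorm H x ≤ c := by
  refine Real.sSup_le ?_ hc
  rintro _ ⟨ξ, hξ, rfl⟩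
  exact (div_le_iff₀ (hH.pos ξ hξ)).mpr (h ξ)

/-- The point of the hyperplane closest to `x` is found by moving along `∇H(ν)`. -/
lemma isLeast_polarNorm_sub (hH : IsAsymmNorm H) (hν₀ : ν ≠ 0) (hν : DifferentiableAt ℝ H ν)
    {x : Euc N} (hx : 0 ≤ ⟪ν, x⟫) :
    IsLeast {r | ∃ y, ⟪ν, y⟫ = 0 ∧ r = polarNorm H (x - y)} (⟪ν, x⟫ / H ν) := by
  have hpos := hH.pos ν hν₀
  have hlower : ∀ y, ⟪ν, y⟫ = 0 → ⟪ν, x⟫ / H ν ≤ polarNorm H (x - y) := fun y hy => by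
    rw [div_le_iff₀ hpos]
    simpa [inner_sub_right, hy] using hH.inner_le_polarNorm_mul ν (x - y)
  set t := ⟪ν, x⟫ / H ν with ht
  have ht₀ : 0 ≤ t := by positivity
  have hy : ⟪ν, x - t • gradient H ν⟫ = 0 := by
    rw [inner_sub_right, inner_smul_right, inner_gradient_right, conj_trivial,
      hH.fderiv_apply_self hν, ht, div_mul_cancel₀ _ hpos.ne', sub_self]
  refine ⟨⟨x - t • gradient H ν, hy, (hlower _ hy).antisymm ?_⟩, ?_⟩
  · refine hH.polarNorm_le ht₀ fun ξ => ?_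
    rw [sub_sub_cancel, inner_smul_right, inner_gradient_right, conj_trivial]
    exact mul_le_mul_of_nonneg_left (hH.fderiv_apply_le hν ξ) ht₀
  · rintro _ ⟨y, hy, rfl⟩
    exact hlower y hy

end PolarNorm

end IsAsymmNorm

lemma IsFinslerNorm.isAsymmNorm {N : ℕ} {H : Euc N → ℝ} (hH : IsFinslerNorm H) :
    IsAsymmNorm H where
  pos ξ hξ := by
    obtain ⟨a, _, ha, -, hab⟩ := hH.bounds
    exact (mul_pos ha (norm_pos_iff.mpr hξ)).trans_le (hab ξ).1
  map_smul_of_pos t ξ ht := by rw [hH.homog, abs_of_pos ht]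
  add_le ξ η := by
    have h := hH.convexOn.2 (mem_univ ξ) (mem_univ η) one_half_pos.le one_half_pos.le
      (add_halves 1)
    rw [← smul_add, hH.homog, abs_of_pos one_half_pos, smul_eq_mul, smul_eq_mul] at h
    linarith

end AsymmetricNorm

section HalfspaceIntegrals

lemma setIntegral_abs_rpow_div_rpow_eq {X : Type*} [TopologicalSpace X] [MeasurableSpace X]
    {μ : Measure X} {S : Set X} {u d l : X → ℝ} {p : ℝ} (hp : p ≠ 0) (hS : MeasurableSet S)
    (hd : EqOn d l S) (hu : tsupport u ⊆ S) :
    ∫ x in S, |u x| ^ p / d x ^ p ∂μ = ∫ x, |u x| ^ p / l x ^ p ∂μ := by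
  refine (setIntegral_congr_fun hS fun x hx => ?_).trans
    (setIntegral_eq_integral_of_forall_compl_eq_zero fun x hx => ?_)
  · simp only [hd hx]
  · simp [image_eq_zero_of_notMem_tsupport fun h => hx (hu h), hp]

variable {E : Type*} [NormedAddCommGroup E] [InnerProductSpace ℝ E] [CompleteSpace E] {S : Set E}

lemma gradient_eq_of_eqOn_inner {d : E → ℝ} {η : E} (hS : IsOpen S)
    (hd : EqOn d (fun x => ⟪η, x⟫) S) {x : E} (hx : x ∈ S) : gradient d x = η := by
  have hη : HasGradientAt (fun x => ⟪η, x⟫) η x :=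
    hasGradientAt_iff_hasFDerivAt.mpr (innerSL ℝ η).hasFDerivAt
  exact (hη.congr_of_eventuallyEq (hd.eventuallyEq_of_mem (hS.mem_nhds hx))).gradient

variable [MeasurableSpace E] {μ : Measure E}

lemma setIntegral_abs_inner_gradient_rpow_eq {p : ℝ} {u : E → ℝ} {w : E} {W : E → E}
    (hp : p ≠ 0) (hS : MeasurableSet S) (hW : ∀ x ∈ S, W x = w) (hu : tsupport u ⊆ S) :
    ∫ x in S, |⟪gradient u x, W x⟫| ^ p ∂μ = ∫ x, |fderiv ℝ u x w| ^ p ∂μ := by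
  refine (setIntegral_congr_fun hS fun x hx => ?_).trans
    (setIntegral_eq_integral_of_forall_compl_eq_zero fun x hx => ?_)
  · simp only [hW x hx, inner_gradient_left]
  · have hx' : x ∉ tsupport (fderiv ℝ u) := fun h => hx (hu (tsupport_fderiv_subset ℝ h))
    simp [image_eq_zero_of_notMem_tsupport hx', hp]

end HalfspaceIntegrals

section Halfspace

variable {N : ℕ} {H : Euc N → ℝ} {ν : Euc N} {p : ℝ}

theorem finsler_hardy_halfspace_best_constant_general (hH : IsAsymmNorm H) (hν₀ : ν ≠ 0)
    (hν : DifferentiableAt ℝ H ν) (hp : 1 < p) {dH : Euc N → ℝ}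
    (hdH : ∀ x, 0 < ⟪ν, x⟫ → dH x = sInf {r | ∃ y, ⟪ν, y⟫ = 0 ∧ r = polarNorm H (x - y)}) :
    IsGLB {r : ℝ | ∃ u : Euc N → ℝ, IsTestFun {x | 0 < ⟪ν, x⟫} u ∧ u ≠ 0 ∧
        r = (∫ x in {x | 0 < ⟪ν, x⟫}, |⟪gradient u x, gradient H (gradient dH x)⟫| ^ p) /
            ∫ x in {x | 0 < ⟪ν, x⟫}, |u x| ^ p / dH x ^ p}
      (((p - 1) / p) ^ p) := by
  have hp₀ : p ≠ 0 := by linarith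
  have hpos := hH.pos ν hν₀
  set η := (H ν)⁻¹ • ν with hη
  have hl : ∀ x, innerSL ℝ η x = ⟪ν, x⟫ / H ν := fun x => by
    rw [innerSL_apply_apply, hη, real_inner_smul_left, inv_mul_eq_div]
  have hS : {x | 0 < ⟪ν, x⟫} = {x | 0 < innerSL ℝ η x} := by
    simp only [hl, div_pos_iff_of_pos_right hpos]
  have hS_open : IsOpen {x | 0 < ⟪ν, x⟫} := isOpen_lt continuous_const (by fun_prop)
  have hd : EqOn dH (innerSL ℝ η) {x | 0 < ⟪ν, x⟫} := fun x hx => by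
    rw [hdH x hx, hl]
    exact (hH.isLeast_polarNorm_sub hν₀ hν (le_of_lt hx)).isGLB.csInf_eq ⟨_, 0, by simp, rfl⟩
  have hgrad : ∀ x ∈ {x | 0 < ⟪ν, x⟫}, gradient H (gradient dH x) = gradient H ν := fun x hx => by
    rw [gradient_eq_of_eqOn_inner hS_open hd hx, gradient, hη, hH.fderiv_smul (inv_pos.mpr hpos),
      gradient]
  have hw : innerSL ℝ η (gradient H ν) = 1 := by
    rw [hl, inner_gradient_right, conj_trivial, hH.fderiv_apply_self hν, div_self hpos.ne']
  convert isGLB_hardy_quotient volume hw hp using 1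
  ext r
  refine exists_congr fun u => ?_
  rw [← hS]
  refine and_congr_right fun hu => ?_
  rw [setIntegral_abs_inner_gradient_rpow_eq hp₀ hS_open.measurableSet hgrad hu.2.2,
    setIntegral_abs_rpow_div_rpow_eq hp₀ hS_open.measurableSet hd hu.2.2]

end Halfspace

/-- The best constant in the anisotropic Hardy inequality on the half-space is
((p-1)/p)^p. -/
theorem finsler_hardy_halfspace_best_constant
    (N : ℕ) (hN : 2 ≤ N) (H : Euc N → ℝ) (hH : IsFinslerNorm H)
    (p : ℝ) (hp : 1 < p)
    (halfspace : Set (Euc N))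
    (hhs : halfspace = {x : Euc N | 0 < x ⟨N - 1, by omega⟩})
    (dH : Euc N → ℝ)
    (hdH : ∀ x, dH x = sInf {r : ℝ | ∃ y : Euc N,
        y ⟨N - 1, by omega⟩ = 0 ∧ r = polarNorm H (x - y)}) :
    sInf {r : ℝ | ∃ u : Euc N → ℝ, IsTestFun halfspace u ∧ u ≠ 0 ∧
        r = (∫ x in halfspace, |⟪gradient u x, gradient H (gradient dH x)⟫| ^ p) /
            ∫ x in halfspace, |u x| ^ p / dH x ^ p}
      = ((p - 1) / p) ^ p := by
  subst hhs
  set e : Euc N := EuclideanSpace.single ⟨N - 1, by omega⟩ 1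
  have he₀ : e ≠ 0 := by simp [e]
  have he : ∀ x : Euc N, ⟪e, x⟫ = x ⟨N - 1, by omega⟩ := by
    simp [e, EuclideanSpace.inner_single_left]
  simp only [← he] at hdH ⊢
  have hdiff : DifferentiableAt ℝ H e := (hH.smooth.differentiableOn two_ne_zero).differentiableAt
    (isOpen_compl_singleton.mem_nhds he₀)
  have h := finsler_hardy_halfspace_best_constant_general hH.isAsymmNorm he₀ hdiff hp
    fun x _ => hdH x
  exact h.csInf_eq h.nonempty
end
end

section
/- Let N ≥ 2, let c > 0 and a ∈ ℝ with 1 + a > 0, and consider the map Φ : ℝ^N ∖ {0} → ℝ^N, Φ(y) = c · H⁰(y)^a · y. Then Φ is differentiable at every y ≠ 0 and the determinant of its Jacobian matrix (∂Φ_i/∂y_j)_{1 ≤ i,j ≤ N} equals c^N (1 + a) H⁰(y)^{aN}; in particular its absolute value is c^N (1 + a) H⁰(y)^{aN}. -/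
/-!
The polar function `H⁰` is the support function of the unit ball `K = {H ≤ 1}`. A positive definite
Hessian prevents `H²` from having a local maximum along a line at a nonzero point, so the interior
of a segment with endpoints in `K` never meets `{H = 1}`: `K` is strictly convex. For `y ≠ 0` the
maximizer `ξ` of `⟪·, y⟫` over `K` is therefore unique. By compactness the maximizers at `x` tend to
`ξ` as `x → y`, which makes `H⁰` differentiable at `y` with gradient `ξ`, and Euler's identity
`⟪ξ, y⟫ = H⁰ y` says that the supremum is attained at `ξ`.

The logarithmic derivative of `c (H⁰)^a` at `y` is `ℓ = (a / H⁰ y) ⟪ξ, ·⟫`, so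
`DΦ(y) = c (H⁰ y)^a (id + ℓ ⊗ y)`. The determinant of the rank-one perturbation is
`1 + ℓ y = 1 + a`.
-/

open MeasureTheory Set Filter
open scoped RealInnerProductSpace Topology ENNReal NNReal

noncomputable section

lemma deriv_deriv_nonpos_of_isLocalMax {g : ℝ → ℝ} {x : ℝ} (hg : ContinuousAt g x)
    (hmax : IsLocalMax g x) : deriv (deriv g) x ≤ 0 := by
  by_contra! hpos
  have hmin : IsLocalMin g x := isLocalMin_of_deriv_deriv_pos hpos hmax.deriv_eq_zero hg
  have hconst : g =ᶠ[𝓝 x] fun _ => g x := by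
    filter_upwards [hmin, hmax] with t h₁ h₂ using le_antisymm h₂ h₁
  have hzero : deriv (deriv g) x = 0 := by simpa using hconst.deriv.deriv_eq
  exact hpos.ne' hzero

section StrictConvexity

variable {E : Type*} [NormedAddCommGroup E] [NormedSpace ℝ E]

lemma deriv_deriv_comp_add_smul {f : E → ℝ} {z v : E} (hf : ContDiffAt ℝ 2 f z) :
    deriv (deriv fun t : ℝ => f (z + t • v)) 0 = iteratedFDeriv ℝ 2 f z ![v, v] := by
  have hline : Tendsto (fun t : ℝ => z + t • v) (𝓝 0) (𝓝 z) :=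
    Continuous.tendsto' (by fun_prop) _ _ (by simp)
  have hderiv : (deriv fun t : ℝ => f (z + t • v)) =ᶠ[𝓝 0]
      fun t => iteratedFDeriv ℝ 1 f (z + t • v) fun _ => v := by
    filter_upwards [hline.eventually (hf.eventually (by simp))] with t ht
    rw [(ht.differentiableAt (by simp)).deriv_comp_add_smul, iteratedFDeriv_one_apply]
  have hdiag : ![v, v] = fun _ => v := by ext i; fin_cases i <;> rfl
  rw [hderiv.deriv_eq, ContDiffAt.deriv_fderiv_add_smul (by simpa [one_add_one_eq_two] using hf),
    zero_smul, add_zero, hdiag]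

lemma iteratedFDeriv_two_nonpos_of_isLocalMax {f : E → ℝ} {z v : E} (hf : ContDiffAt ℝ 2 f z)
    (hmax : IsLocalMax (fun t : ℝ => f (z + t • v)) 0) : iteratedFDeriv ℝ 2 f z ![v, v] ≤ 0 := by
  rw [← deriv_deriv_comp_add_smul hf]
  refine deriv_deriv_nonpos_of_isLocalMax ?_ hmax
  exact ContinuousAt.comp (by simpa using hf.continuousAt) (by fun_prop)

lemma strictConvex_setOf_le_of_iteratedFDeriv_two_pos {f : E → ℝ} {r : ℝ} (hf : Continuous f)
    (hconv : Convex ℝ {x | f x ≤ r}) (hsmooth : ∀ z, f z = r → ContDiffAt ℝ 2 f z)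
    (hpos : ∀ z, f z = r → ∀ v, v ≠ 0 → 0 < iteratedFDeriv ℝ 2 f z ![v, v]) :
    StrictConvex ℝ {x | f x ≤ r} := by
  intro x hx y hy hxy a b ha hb hab
  have hle : f (a • x + b • y) ≤ r := hconv hx hy ha.le hb.le hab
  rcases hle.lt_or_eq with hlt | heq
  · exact mem_interior_iff_mem_nhds.2
      ((hf.continuousAt.eventually_lt continuousAt_const hlt).mono fun _ => le_of_lt)
  · have hmax : IsLocalMax (fun t : ℝ => f (a • x + b • y + t • (y - x))) 0 := by
      filter_upwards [Ioo_mem_nhds (neg_lt_zero.2 hb) ha] with t ht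
      have hmem : f ((a - t) • x + (b + t) • y) ≤ r :=
        hconv hx hy (by linarith [ht.2]) (by linarith [ht.1]) (by linarith)
      have hline : a • x + b • y + t • (y - x) = (a - t) • x + (b + t) • y := by module
      simpa only [hline, zero_smul, add_zero, heq] using hmem
    exact absurd (iteratedFDeriv_two_nonpos_of_isLocalMax (hsmooth _ heq) hmax)
      (hpos _ heq _ (sub_ne_zero.2 hxy.symm)).not_ge

lemma eq_of_isMaxOn_of_strictConvex {K : Set E} (hK : StrictConvex ℝ K) {ℓ : E →L[ℝ] ℝ}
    (hℓ : ℓ ≠ 0) {x y : E} (hx : x ∈ K) (hy : y ∈ K) (hxmax : IsMaxOn ℓ K x)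
    (hymax : IsMaxOn ℓ K y) : x = y := by
  by_contra hxy
  have hxy_val : ℓ x = ℓ y := le_antisymm (hymax hx) (hxmax hy)
  have hmid : midpoint ℝ x y ∈ interior K := by
    rw [midpoint_eq_smul_add, smul_add]
    exact hK hx hy hxy (by norm_num) (by norm_num) (by norm_num)
  have hmid_val : ℓ (midpoint ℝ x y) = ℓ x := by
    rw [midpoint_eq_smul_add, map_smul, map_add, ← hxy_val, smul_eq_mul, invOf_eq_inv]
    ring
  have hmax : IsLocalMax ℓ (midpoint ℝ x y) := by
    filter_upwards [mem_interior_iff_mem_nhds.1 hmid] with z hz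
    exact (hxmax hz).trans_eq hmid_val.symm
  exact hℓ (hmax.hasFDerivAt_eq_zero ℓ.hasFDerivAt)

end StrictConvexity

section SupportFunction

variable {E : Type*} [NormedAddCommGroup E] [InnerProductSpace ℝ E] {K : Set E}

/-- The support function `x ↦ sup_{ξ ∈ K} ⟪ξ, x⟫` of a set `K`, used here to express polar
functions. As a real supremum it is meaningful only for nonempty bounded `K`. -/
def supportFun (K : Set E) (x : E) : ℝ :=
  sSup ((fun ξ => ⟪ξ, x⟫) '' K)

lemma inner_le_supportFun (hK : IsCompact K) {ξ : E} (hξ : ξ ∈ K) (x : E) :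
    ⟪ξ, x⟫ ≤ supportFun K x :=
  le_csSup (hK.image (by fun_prop)).bddAbove (mem_image_of_mem _ hξ)

lemma exists_inner_eq_supportFun (hK : IsCompact K) (hne : K.Nonempty) (x : E) :
    ∃ ξ ∈ K, ⟪ξ, x⟫ = supportFun K x := by
  obtain ⟨ξ, hξ, h⟩ := hK.exists_sSup_image_eq hne (f := fun ξ => ⟪ξ, x⟫) (by fun_prop)
  exact ⟨ξ, hξ, h.symm⟩

lemma tendsto_of_inner_eq_supportFun (hK : IsCompact K) {ξ y : E}
    (huniq : ∀ η ∈ K, ⟪η, y⟫ = supportFun K y → η = ξ) {ζ : E → E} (hζK : ∀ x, ζ x ∈ K)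
    (hζ : ∀ x, ⟪ζ x, x⟫ = supportFun K x) : Tendsto ζ (𝓝 y) (𝓝 ξ) := by
  refine hK.tendsto_nhds_of_unique_mapClusterPt (Eventually.of_forall hζK) fun η hη hcluster => ?_
  obtain ⟨U, hU, hUη⟩ := mapClusterPt_iff_ultrafilter.1 hcluster
  have hUy : Tendsto id U (𝓝 y) := hU
  have hmax : ⟪ζ y, y⟫ ≤ ⟪η, y⟫ :=
    le_of_tendsto_of_tendsto' (tendsto_const_nhds.inner hUy) (hUη.inner hUy) fun x =>
      (inner_le_supportFun hK (hζK y) x).trans_eq (hζ x).symm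
  exact huniq η hη (le_antisymm (inner_le_supportFun hK hη y) ((hζ y).symm.trans_le hmax))

lemma hasFDerivAt_supportFun (hK : IsCompact K) {ξ y : E} (hξ : ξ ∈ K)
    (huniq : ∀ η ∈ K, ⟪η, y⟫ = supportFun K y → η = ξ) :
    HasFDerivAt (supportFun K) (innerSL ℝ ξ) y := by
  choose ζ hζK hζ using exists_inner_eq_supportFun hK ⟨ξ, hξ⟩
  have hζy : ζ y = ξ := huniq _ (hζK y) (hζ y)
  have hlim : Tendsto ζ (𝓝 y) (𝓝 ξ) := tendsto_of_inner_eq_supportFun hK huniq hζK hζ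
  rw [hasFDerivAt_iff_isLittleO, Asymptotics.isLittleO_iff]
  intro ε hε
  filter_upwards [Metric.tendsto_nhds.1 hlim ε hε] with x hx
  have hlower : 0 ≤ supportFun K x - supportFun K y - ⟪ξ, x - y⟫ := by
    have := inner_le_supportFun hK hξ x
    rw [← hζ y, hζy, inner_sub_right]
    linarith
  have hupper : supportFun K x - supportFun K y - ⟪ξ, x - y⟫ ≤ ⟪ζ x - ξ, x - y⟫ := by
    have := inner_le_supportFun hK (hζK x) y
    rw [← hζ x, inner_sub_left, inner_sub_right (ζ x)]
    linarith
  rw [innerSL_apply_apply, Real.norm_of_nonneg hlower]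
  calc supportFun K x - supportFun K y - ⟪ξ, x - y⟫
      ≤ ⟪ζ x - ξ, x - y⟫ := hupper
    _ ≤ ‖ζ x - ξ‖ * ‖x - y‖ := real_inner_le_norm _ _
    _ ≤ ε * ‖x - y‖ := by
      gcongr
      exact (dist_eq_norm (ζ x) ξ ▸ hx).le

lemma exists_hasFDerivAt_supportFun (hK : IsCompact K) (hconv : StrictConvex ℝ K)
    (hne : K.Nonempty) {y : E} (hy : y ≠ 0) :
    ∃ ξ ∈ K, ⟪ξ, y⟫ = supportFun K y ∧ HasFDerivAt (supportFun K) (innerSL ℝ ξ) y := by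
  obtain ⟨ξ, hξ, hξy⟩ := exists_inner_eq_supportFun hK hne y
  have hmax : ∀ η, ⟪η, y⟫ = supportFun K y → IsMaxOn (innerSL ℝ y) K η := fun η hη ζ hζ => by
    simpa [real_inner_comm _ y, hη] using inner_le_supportFun hK hζ y
  have hy' : innerSL ℝ y ≠ 0 := fun h => hy (by simpa using DFunLike.congr_fun h y)
  exact ⟨ξ, hξ, hξy, hasFDerivAt_supportFun hK hξ fun η hη hηy =>
    eq_of_isMaxOn_of_strictConvex hconv hy' hη hξ (hmax η hηy) (hmax ξ hξy)⟩

end SupportFunction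

lemma polarNorm_zero {N : ℕ} (H : Euc N → ℝ) : polarNorm H 0 = 0 := by
  refine le_antisymm (Real.sSup_nonpos ?_) (Real.sSup_nonneg ?_) <;>
    · rintro _ ⟨ξ, -, rfl⟩
      simp

namespace IsFinslerNorm

variable {N : ℕ} {H : Euc N → ℝ}

protected lemma map_zero (hH : IsFinslerNorm H) : H 0 = 0 := by
  simpa using hH.homog 0 0

lemma pos (hH : IsFinslerNorm H) {ξ : Euc N} (hξ : ξ ≠ 0) : 0 < H ξ := by
  obtain ⟨a, b, ha, -, h⟩ := hH.bounds
  exact (mul_pos ha (norm_pos_iff.2 hξ)).trans_le (h ξ).1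

protected lemma continuous (hH : IsFinslerNorm H) : Continuous H :=
  hH.convexOn.locallyLipschitz.continuous

lemma map_inv_smul_self (hH : IsFinslerNorm H) {ξ : Euc N} (hξ : ξ ≠ 0) :
    H ((H ξ)⁻¹ • ξ) = 1 := by
  have hpos := hH.pos hξ
  rw [hH.homog, abs_of_pos (inv_pos.2 hpos), inv_mul_cancel₀ hpos.ne']

lemma isCompact_unitBall (hH : IsFinslerNorm H) : IsCompact {ξ | H ξ ≤ 1} := by
  obtain ⟨a, b, ha, -, h⟩ := hH.bounds
  refine (isCompact_closedBall (0 : Euc N) a⁻¹).of_isClosed_subset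
    (isClosed_le hH.continuous continuous_const) fun ξ (hξ : H ξ ≤ 1) => ?_
  rw [mem_closedBall_zero_iff, ← one_div, le_div_iff₀' ha]
  exact (h ξ).1.trans hξ

lemma strictConvex_unitBall (hH : IsFinslerNorm H) : StrictConvex ℝ {ξ | H ξ ≤ 1} := by
  have hsq : {ξ | H ξ ≤ 1} = {ξ | H ξ ^ 2 ≤ 1} := by
    ext ξ
    exact (sq_le_one_iff₀ (hH.nonneg ξ)).symm
  have hne : ∀ z, H z ^ 2 = 1 → z ≠ 0 := by
    rintro _ hz rfl
    simp [hH.map_zero] at hz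
  have hconv : Convex ℝ {ξ | H ξ ≤ 1} := by simpa using hH.convexOn.convex_le 1
  rw [hsq] at hconv ⊢
  exact strictConvex_setOf_le_of_iteratedFDeriv_two_pos (hH.continuous.pow 2) hconv
    (fun z hz => (hH.smooth.pow 2).contDiffAt (isOpen_compl_singleton.mem_nhds (hne z hz)))
    (fun z hz => hH.hessPosDef z (hne z hz))

lemma inner_div_le_supportFun (hH : IsFinslerNorm H) {ξ : Euc N} (hξ : ξ ≠ 0) (x : Euc N) :
    ⟪ξ, x⟫ / H ξ ≤ supportFun {ξ | H ξ ≤ 1} x := by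
  rw [div_eq_inv_mul, ← real_inner_smul_left]
  exact inner_le_supportFun hH.isCompact_unitBall (hH.map_inv_smul_self hξ).le x

lemma inner_le_polarNorm_mul (hH : IsFinslerNorm H) (ξ x : Euc N) :
    ⟪ξ, x⟫ ≤ polarNorm H x * H ξ := by
  rcases eq_or_ne ξ 0 with rfl | hξ
  · simp [hH.map_zero]
  · rw [← div_le_iff₀ (hH.pos hξ)]
    refine le_csSup ⟨supportFun {ξ | H ξ ≤ 1} x, ?_⟩ ⟨ξ, hξ, rfl⟩
    rintro _ ⟨η, hη, rfl⟩
    exact hH.inner_div_le_supportFun hη x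

lemma polarNorm_pos (hH : IsFinslerNorm H) {y : Euc N} (hy : y ≠ 0) : 0 < polarNorm H y :=
  pos_of_mul_pos_left ((real_inner_self_pos.2 hy).trans_le (hH.inner_le_polarNorm_mul y y))
    (hH.nonneg y)

lemma polarNorm_nonneg (hH : IsFinslerNorm H) (x : Euc N) : 0 ≤ polarNorm H x := by
  rcases eq_or_ne x 0 with rfl | hx
  · exact (polarNorm_zero H).ge
  · exact (hH.polarNorm_pos hx).le

lemma polarNorm_eq_supportFun (hH : IsFinslerNorm H) :
    polarNorm H = supportFun {ξ | H ξ ≤ 1} := by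
  have hzero : (0 : Euc N) ∈ {ξ | H ξ ≤ 1} := hH.map_zero.trans_le zero_le_one
  ext x
  apply le_antisymm
  · refine Real.sSup_le ?_ (by simpa using inner_le_supportFun hH.isCompact_unitBall hzero x)
    rintro _ ⟨ξ, hξ, rfl⟩
    exact hH.inner_div_le_supportFun hξ x
  · refine csSup_le (Nonempty.image _ ⟨0, hzero⟩) ?_
    rintro _ ⟨ξ, hξ, rfl⟩
    exact (hH.inner_le_polarNorm_mul ξ x).trans (mul_le_of_le_one_right (hH.polarNorm_nonneg x) hξ)

lemma exists_hasFDerivAt_polarNorm (hH : IsFinslerNorm H) {y : Euc N} (hy : y ≠ 0) :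
    ∃ ξ : Euc N, ⟪ξ, y⟫ = polarNorm H y ∧ HasFDerivAt (polarNorm H) (innerSL ℝ ξ) y := by
  rw [hH.polarNorm_eq_supportFun]
  obtain ⟨ξ, -, h⟩ := exists_hasFDerivAt_supportFun hH.isCompact_unitBall hH.strictConvex_unitBall
    ⟨0, hH.map_zero.trans_le zero_le_one⟩ hy
  exact ⟨ξ, h⟩

end IsFinslerNorm

section RadialMap

variable {𝕜 E : Type*} [NontriviallyNormedField 𝕜] [NormedAddCommGroup E] [NormedSpace 𝕜 E]

-- Prescribing `Dg(y)` as `g y • ℓ`, with `ℓ` the logarithmic derivative, avoids dividing by `g y`.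
lemma hasFDerivAt_smul_self {g : E → 𝕜} {ℓ : E →L[𝕜] 𝕜} {y : E}
    (hg : HasFDerivAt g (g y • ℓ) y) :
    HasFDerivAt (fun x => g x • x) (g y • (ContinuousLinearMap.id 𝕜 E + ℓ.smulRight y)) y := by
  refine (hg.fun_smul (hasFDerivAt_id y)).congr_fderiv ?_
  ext v
  simp [mul_smul]

lemma det_fderiv_smul_self [FiniteDimensional 𝕜 E] {g : E → 𝕜} {ℓ : E →L[𝕜] 𝕜} {y : E}
    (hg : HasFDerivAt g (g y • ℓ) y) :
    LinearMap.det (fderiv 𝕜 (fun x => g x • x) y).toLinearMap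
      = g y ^ Module.finrank 𝕜 E * (1 + ℓ y) := by
  have hrankOne : (fderiv 𝕜 (fun x => g x • x) y).toLinearMap
      = g y • LinearMap.transvection ℓ.toLinearMap y := by
    rw [(hasFDerivAt_smul_self hg).fderiv]
    ext v
    simp [LinearMap.transvection.apply]
  rw [hrankOne, LinearMap.det_smul, LinearMap.transvection.det, ContinuousLinearMap.coe_coe]

end RadialMap

lemma hasFDerivAt_const_mul_rpow {E : Type*} [NormedAddCommGroup E] [NormedSpace ℝ E]
    {p : E → ℝ} {p' : E →L[ℝ] ℝ} {y : E} (hp : HasFDerivAt p p' y) (hy : p y ≠ 0) (c a : ℝ) :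
    HasFDerivAt (fun x => c * p x ^ a) ((c * p y ^ a) • (a / p y) • p') y := by
  refine ((hp.rpow_const (p := a) (Or.inl hy)).const_mul c).congr_fderiv ?_
  rw [Real.rpow_sub_one hy, smul_smul, smul_smul]
  congr 1
  ring

theorem finsler_jacobian_radial_map_general {N : ℕ} {H : Euc N → ℝ} (hH : IsFinslerNorm H)
    (c a : ℝ) {Φ : Euc N → Euc N} (hΦ : ∀ y, Φ y = (c * polarNorm H y ^ a) • y)
    {y : Euc N} (hy : y ≠ 0) :
    DifferentiableAt ℝ Φ y ∧
    LinearMap.det ((fderiv ℝ Φ y).toLinearMap)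
      = c ^ N * (1 + a) * polarNorm H y ^ (a * (N : ℝ)) ∧
    |LinearMap.det ((fderiv ℝ Φ y).toLinearMap)|
      = |c| ^ N * |1 + a| * polarNorm H y ^ (a * (N : ℝ)) := by
  obtain rfl := funext hΦ
  obtain ⟨ξ, heuler, hξ⟩ := hH.exists_hasFDerivAt_polarNorm hy
  have hpos := hH.polarNorm_pos hy
  have hfactor := hasFDerivAt_const_mul_rpow hξ hpos.ne' c a
  have hlog : ((a / polarNorm H y) • innerSL ℝ ξ) y = a := by
    simp [heuler, hpos.ne']
  have hdet : LinearMap.det (fderiv ℝ (fun y => (c * polarNorm H y ^ a) • y) y).toLinearMap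
      = c ^ N * (1 + a) * polarNorm H y ^ (a * (N : ℝ)) := by
    rw [det_fderiv_smul_self hfactor, hlog, finrank_euclideanSpace_fin, mul_pow,
      Real.rpow_mul hpos.le, Real.rpow_natCast]
    ring
  refine ⟨(hasFDerivAt_smul_self hfactor).differentiableAt, hdet, ?_⟩
  rw [hdet, abs_mul, abs_mul, abs_pow, abs_of_nonneg (Real.rpow_nonneg hpos.le _)]

/-- Jacobian determinant of the anisotropic radial deformation y ↦ c H⁰(y)^a y. -/
theorem finsler_jacobian_radial_map
    (N : ℕ) (hN : 2 ≤ N) (H : Euc N → ℝ) (hH : IsFinslerNorm H)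
    (c : ℝ) (hc : 0 < c) (a : ℝ) (ha : 0 < 1 + a)
    (Φ : Euc N → Euc N) (hΦ : ∀ y, Φ y = (c * polarNorm H y ^ a) • y)
    (y : Euc N) (hy : y ≠ 0) :
    DifferentiableAt ℝ Φ y ∧
    LinearMap.det ((fderiv ℝ Φ y).toLinearMap)
      = c ^ N * (1 + a) * polarNorm H y ^ (a * (N : ℝ)) ∧
    |LinearMap.det ((fderiv ℝ Φ y).toLinearMap)|
      = c ^ N * (1 + a) * polarNorm H y ^ (a * (N : ℝ)) := by
  simpa only [abs_of_pos hc, abs_of_pos ha] using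
    finsler_jacobian_radial_map_general hH c a hΦ hy
end
end

section
/- Let N ≥ 2, R > 0, λ > 0, let W_R = { x ∈ ℝ^N : H⁰(x) < R } be the Wulff ball of radius R, and let u ∈ C_c^∞(W_R ∖ {0}). Define u_λ(x) = λ^{−(N−1)/N} · u( (H⁰(x)/R)^{λ−1} x ) for x ∈ W_R ∖ {0} (and u_λ(0) = 0). Then both sides of the anisotropic critical Hardy inequality are invariant under this scaling: ∫_{W_R} |(x/H⁰(x)) · ∇u_λ(x)|^N dx = ∫_{W_R} |(y/H⁰(y)) · ∇u(y)|^N dy and ∫_{W_R} |u_λ(x)|^N / ( H⁰(x)^N (log(R/H⁰(x)))^N ) dx = ∫_{W_R} |u(y)|^N / ( H⁰(y)^N (log(R/H⁰(y)))^N ) dy. -/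
/-!
Write `P = H⁰` and `Φ x = (P x / R)^(λ-1) x`, so that `u_λ = λ^(-(N-1)/N) u ∘ Φ`. Since
`P (Φ x) / R = (P x / R)^λ`, in the radial variable `s = log (R / P x)` the map `Φ` is the dilation
`s ↦ λ s`, while `dx / P(x)^N` is `ds` times a measure on the Wulff sphere; so `Φ` pulls
`dx / P(x)^N` back to `λ dx / P(x)^N`. On the other hand `Du_λ(x) x` and `u_λ(x) / s(x)` are
`λ^(1/N)` times the same quantities for `u` at `Φ x`, so their `N`-th powers also pick up a
factor `λ`.

As `P` is Lipschitz, Rademacher's theorem makes it differentiable almost everywhere, and the nonzero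
points of `{P < R}` where it is differentiable are permuted by `Φ`. There Euler's identity
`DP(x) x = P x` shows that `DΦ(x)` is `(P x / R)^(λ-1)` times the transvection
`v ↦ v + (λ - 1) / P(x) * DP(x) v • x`, whose determinant is `λ`.
-/

open MeasureTheory Set Filter
open scoped RealInnerProductSpace Topology ENNReal NNReal

noncomputable section

/-- A gauge on a real normed space: a function that is positive off the origin, positively
homogeneous of degree one and Lipschitz. -/
structure IsLipschitzGauge {E : Type*} [NormedAddCommGroup E] [NormedSpace ℝ E] (P : E → ℝ) :
    Prop where
  pos : ∀ ⦃x⦄, x ≠ 0 → 0 < P x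
  map_smul_of_pos : ∀ ⦃t : ℝ⦄, 0 < t → ∀ x, P (t • x) = t * P x
  lipschitz : ∃ K, LipschitzWith K P

section PolarNorm

variable {N : ℕ} {H : Euc N → ℝ} {a : ℝ}

lemma polarNorm_smul {t : ℝ} (ht : 0 ≤ t) (x : Euc N) :
    polarNorm H (t • x) = t * polarNorm H x := by
  rw [polarNorm, polarNorm, ← smul_eq_mul, ← Real.sSup_smul_of_nonneg ht]
  congr 1
  ext r
  simp only [mem_smul_set, mem_ofPred_eq, inner_smul_right, mul_div_assoc, smul_eq_mul]
  grind

lemma inner_div_le_of_mul_norm_le (ha : 0 < a) (hH : ∀ ξ, a * ‖ξ‖ ≤ H ξ) (x : Euc N)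
    {ξ : Euc N} (hξ : ξ ≠ 0) : ⟪ξ, x⟫ / H ξ ≤ a⁻¹ * ‖x‖ := by
  have hξ' : 0 < ‖ξ‖ := norm_pos_iff.2 hξ
  rw [div_le_iff₀ ((mul_pos ha hξ').trans_le (hH ξ))]
  calc ⟪ξ, x⟫ ≤ ‖ξ‖ * ‖x‖ := real_inner_le_norm ξ x
    _ = a⁻¹ * ‖x‖ * (a * ‖ξ‖) := by field_simp
    _ ≤ a⁻¹ * ‖x‖ * H ξ := by gcongr; exact hH ξ

lemma inner_div_le_polarNorm (ha : 0 < a) (hH : ∀ ξ, a * ‖ξ‖ ≤ H ξ) (x : Euc N)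
    {ξ : Euc N} (hξ : ξ ≠ 0) : ⟪ξ, x⟫ / H ξ ≤ polarNorm H x := by
  refine le_csSup ⟨a⁻¹ * ‖x‖, ?_⟩ ⟨ξ, hξ, rfl⟩
  rintro _ ⟨η, hη, rfl⟩
  exact inner_div_le_of_mul_norm_le ha hH x hη

lemma polarNorm_pos (ha : 0 < a) (hH : ∀ ξ, a * ‖ξ‖ ≤ H ξ) {x : Euc N} (hx : x ≠ 0) :
    0 < polarNorm H x := by
  have hx' : 0 < ‖x‖ := norm_pos_iff.2 hx
  have hHx : 0 < H x := (mul_pos ha hx').trans_le (hH x)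
  refine lt_of_lt_of_le ?_ (inner_div_le_polarNorm ha hH x hx)
  rw [real_inner_self_eq_norm_sq]
  positivity

lemma polarNorm_le_add_mul_dist [Nontrivial (Euc N)] (ha : 0 < a) (hH : ∀ ξ, a * ‖ξ‖ ≤ H ξ)
    (x y : Euc N) : polarNorm H x ≤ polarNorm H y + a⁻¹ * dist x y := by
  obtain ⟨e, he⟩ := exists_ne (0 : Euc N)
  refine csSup_le ⟨_, e, he, rfl⟩ ?_
  rintro _ ⟨ξ, hξ, rfl⟩
  calc ⟪ξ, x⟫ / H ξ = ⟪ξ, y⟫ / H ξ + ⟪ξ, x - y⟫ / H ξ := by rw [inner_sub_right]; ring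
    _ ≤ polarNorm H y + a⁻¹ * dist x y := by
      rw [dist_eq_norm]
      exact add_le_add (inner_div_le_polarNorm ha hH y hξ)
        (inner_div_le_of_mul_norm_le ha hH (x - y) hξ)

lemma isLipschitzGauge_polarNorm [Nontrivial (Euc N)] (ha : 0 < a)
    (hH : ∀ ξ, a * ‖ξ‖ ≤ H ξ) : IsLipschitzGauge (polarNorm H) where
  pos _ hx := polarNorm_pos ha hH hx
  map_smul_of_pos _ ht x := polarNorm_smul ht.le x
  lipschitz := ⟨_, .of_le_add_mul' a⁻¹ (polarNorm_le_add_mul_dist ha hH)⟩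

end PolarNorm

/-- The map `Φ x = (P x / R)^(λ-1) x`, which raises `P / R` to the power `λ` and preserves rays
from the origin. -/
def radialPower {E : Type*} [SMul ℝ E] (P : E → ℝ) (R lam : ℝ) (x : E) : E :=
  (P x / R) ^ (lam - 1) • x

/-- The nonzero points of the ball `{P < R}` at which `P` is differentiable; the radial powers are
differentiable there. -/
def regularLocus {E : Type*} [NormedAddCommGroup E] [NormedSpace ℝ E] (P : E → ℝ) (R : ℝ) :
    Set E :=
  {x | x ≠ 0 ∧ P x < R ∧ DifferentiableAt ℝ P x}

/-- The scaling `u_λ = λ^(-(p-1)/p) u ∘ Φ` of a function `u`, where `Φ` is the radial power map of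
exponent `λ`. The critical Hardy inequality has `p = n`, the dimension of `E`; other values of `p`
correspond to the integral of `|(x / P x) · ∇u|^p` with weight `P^(p-n)`. -/
def hardyScaling {E F : Type*} [SMul ℝ E] [SMul ℝ F] (P : E → ℝ) (R lam p : ℝ) (u : E → F)
    (x : E) : F :=
  lam ^ (-((p - 1) / p)) • u (radialPower P R lam x)

section RadialPower

variable {E : Type*} [NormedAddCommGroup E] [NormedSpace ℝ E] {P : E → ℝ} {R lam : ℝ} {x : E}

lemma radialPower_one : radialPower P R 1 x = x := by
  simp [radialPower]

namespace IsLipschitzGauge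

lemma continuous (hP : IsLipschitzGauge P) : Continuous P :=
  hP.lipschitz.elim fun _ hK ↦ hK.continuous

lemma nonneg (hP : IsLipschitzGauge P) (x : E) : 0 ≤ P x := by
  rcases eq_or_ne x 0 with rfl | hx
  · have h_smul := hP.map_smul_of_pos two_pos 0
    rw [smul_zero] at h_smul
    linarith
  · exact (hP.pos hx).le

lemma div_rpow_pos (hP : IsLipschitzGauge P) (hR : 0 < R) (hx : x ≠ 0) (s : ℝ) :
    0 < (P x / R) ^ s :=
  Real.rpow_pos_of_pos (div_pos (hP.pos hx) hR) s

lemma radialPower_ne_zero (hP : IsLipschitzGauge P) (hR : 0 < R) (hx : x ≠ 0) :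
    radialPower P R lam x ≠ 0 :=
  smul_ne_zero (hP.div_rpow_pos hR hx _).ne' hx

lemma map_radialPower (hP : IsLipschitzGauge P) (hR : 0 < R) (hx : x ≠ 0) :
    P (radialPower P R lam x) = (P x / R) ^ (lam - 1) * P x :=
  hP.map_smul_of_pos (hP.div_rpow_pos hR hx _) x

lemma map_radialPower_div (hP : IsLipschitzGauge P) (hR : 0 < R) (hx : x ≠ 0) :
    P (radialPower P R lam x) / R = (P x / R) ^ lam := by
  have hPR : P x / R ≠ 0 := (div_pos (hP.pos hx) hR).ne'
  rw [hP.map_radialPower hR hx, mul_div_assoc, Real.rpow_sub_one hPR, div_mul_cancel₀ _ hPR]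

lemma log_div_map_radialPower (hP : IsLipschitzGauge P) (hR : 0 < R) (hx : x ≠ 0) :
    Real.log (R / P (radialPower P R lam x)) = lam * Real.log (R / P x) := by
  rw [← inv_div, hP.map_radialPower_div hR hx, ← inv_div (P x) R, Real.log_inv, Real.log_inv,
    Real.log_rpow (div_pos (hP.pos hx) hR), mul_neg]

lemma map_radialPower_lt (hP : IsLipschitzGauge P) (hR : 0 < R) (hlam : 0 < lam) (hx : x ≠ 0)
    (hxR : P x < R) : P (radialPower P R lam x) < R := by
  rw [← div_lt_one hR, hP.map_radialPower_div hR hx]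
  exact Real.rpow_lt_one (div_pos (hP.pos hx) hR).le ((div_lt_one hR).2 hxR) hlam

lemma radialPower_radialPower (hP : IsLipschitzGauge P) (hR : 0 < R) (hx : x ≠ 0) (mu : ℝ) :
    radialPower P R mu (radialPower P R lam x) = radialPower P R (lam * mu) x := by
  have hPR := div_pos (hP.pos hx) hR
  rw [radialPower, hP.map_radialPower_div hR hx, radialPower, radialPower, smul_smul,
    ← Real.rpow_mul hPR.le, ← Real.rpow_add hPR]
  congr 2
  ring

lemma differentiableAt_smul (hP : IsLipschitzGauge P) {t : ℝ} (ht : 0 < t)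
    (hx : DifferentiableAt ℝ P x) : DifferentiableAt ℝ P (t • x) := by
  have hP_eq : P = fun y ↦ t * P (t⁻¹ • y) := by
    funext y
    rw [hP.map_smul_of_pos (inv_pos.2 ht), mul_inv_cancel_left₀ ht.ne']
  rw [← inv_smul_smul₀ ht.ne' x] at hx
  rw [hP_eq]
  exact (hx.comp (t • x) (differentiableAt_id.const_smul t⁻¹)).const_mul t

lemma fderiv_self (hP : IsLipschitzGauge P) (hx : DifferentiableAt ℝ P x) :
    fderiv ℝ P x x = P x := by
  have h_ray : HasDerivAt (fun t : ℝ ↦ P (t • x)) (fderiv ℝ P x x) 1 := by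
    have h_smul : HasDerivAt (fun t : ℝ ↦ t • x) x 1 := by
      simpa using (hasDerivAt_id (1 : ℝ)).smul_const x
    exact HasFDerivAt.comp_hasDerivAt 1 (by simpa using hx.hasFDerivAt) h_smul
  have h_linear : HasDerivAt (fun t : ℝ ↦ P (t • x)) (P x) 1 := by
    refine (hasDerivAt_mul_const (P x)).congr_of_eventuallyEq ?_
    filter_upwards [lt_mem_nhds one_pos] with t ht
    exact hP.map_smul_of_pos ht x
  exact h_ray.unique h_linear

lemma hasFDerivAt_radialPower (hP : IsLipschitzGauge P) (hR : 0 < R)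
    (hx : x ∈ regularLocus P R) :
    HasFDerivAt (radialPower P R lam)
      ((P x / R) ^ (lam - 1) •
        (.id ℝ E + (((lam - 1) / P x) • fderiv ℝ P x).smulRight x)) x := by
  obtain ⟨hx0, -, hxd⟩ := hx
  have hPx := hP.pos hx0
  have hPR := (div_pos hPx hR).ne'
  have h_div : HasFDerivAt (fun y ↦ P y / R) (R⁻¹ • fderiv ℝ P x) x := by
    simpa only [div_eq_inv_mul] using hxd.hasFDerivAt.const_mul R⁻¹
  refine ((h_div.rpow_const (p := lam - 1) (.inl hPR)).smul (hasFDerivAt_id x)).congr_fderiv ?_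
  ext v
  simp only [add_apply, smul_apply, ContinuousLinearMap.smulRight_apply,
    ContinuousLinearMap.id_apply, id, smul_eq_mul, smul_add, smul_smul]
  congr 2
  rw [Real.rpow_sub_one hPR]
  field_simp

lemma differentiableAt_radialPower (hP : IsLipschitzGauge P) (hR : 0 < R)
    (hx : x ∈ regularLocus P R) : DifferentiableAt ℝ (radialPower P R lam) x :=
  (hP.hasFDerivAt_radialPower hR hx).differentiableAt

lemma fderiv_radialPower_self (hP : IsLipschitzGauge P) (hR : 0 < R)
    (hx : x ∈ regularLocus P R) :
    fderiv ℝ (radialPower P R lam) x x = lam • radialPower P R lam x := by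
  have hPx := (hP.pos hx.1).ne'
  rw [(hP.hasFDerivAt_radialPower hR hx).fderiv]
  simp only [add_apply, smul_apply, ContinuousLinearMap.smulRight_apply,
    ContinuousLinearMap.id_apply, hP.fderiv_self hx.2.2, smul_eq_mul, div_mul_cancel₀ _ hPx,
    radialPower]
  module

lemma det_fderiv_radialPower [FiniteDimensional ℝ E] (hP : IsLipschitzGauge P) (hR : 0 < R)
    (hx : x ∈ regularLocus P R) :
    (fderiv ℝ (radialPower P R lam) x).det =
      lam * ((P x / R) ^ (lam - 1)) ^ Module.finrank ℝ E := by
  have hPx := (hP.pos hx.1).ne'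
  have h_transvection : (fderiv ℝ (radialPower P R lam) x : E →ₗ[ℝ] E) =
      (P x / R) ^ (lam - 1) •
        LinearMap.transvection (((lam - 1) / P x) • (fderiv ℝ P x : E →ₗ[ℝ] ℝ)) x := by
    rw [(hP.hasFDerivAt_radialPower hR hx).fderiv]
    rfl
  rw [ContinuousLinearMap.det, h_transvection, LinearMap.det_smul, LinearMap.transvection.det]
  simp only [LinearMap.smul_apply, ContinuousLinearMap.coe_coe, hP.fderiv_self hx.2.2,
    smul_eq_mul, div_mul_cancel₀ _ hPx]
  ring

lemma radialPower_mem_regularLocus (hP : IsLipschitzGauge P) (hR : 0 < R) (hlam : 0 < lam)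
    (hx : x ∈ regularLocus P R) : radialPower P R lam x ∈ regularLocus P R :=
  ⟨hP.radialPower_ne_zero hR hx.1, hP.map_radialPower_lt hR hlam hx.1 hx.2.1,
    hP.differentiableAt_smul (hP.div_rpow_pos hR hx.1 _) hx.2.2⟩

lemma bijOn_radialPower (hP : IsLipschitzGauge P) (hR : 0 < R) (hlam : 0 < lam) :
    BijOn (radialPower P R lam) (regularLocus P R) (regularLocus P R) := by
  refine InvOn.bijOn (f' := radialPower P R lam⁻¹) ⟨fun x hx ↦ ?_, fun x hx ↦ ?_⟩
    (fun _ ↦ hP.radialPower_mem_regularLocus hR hlam)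
    (fun _ ↦ hP.radialPower_mem_regularLocus hR (inv_pos.2 hlam))
  · rw [hP.radialPower_radialPower hR hx.1, mul_inv_cancel₀ hlam.ne', radialPower_one]
  · rw [hP.radialPower_radialPower hR hx.1, inv_mul_cancel₀ hlam.ne', radialPower_one]

end IsLipschitzGauge

end RadialPower

section ChangeOfVariables

variable {E : Type*} [NormedAddCommGroup E] [NormedSpace ℝ E] [FiniteDimensional ℝ E]
  [MeasurableSpace E] [BorelSpace E] {P : E → ℝ} {R lam : ℝ}

namespace IsLipschitzGauge

lemma measurableSet_regularLocus (hP : IsLipschitzGauge P) :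
    MeasurableSet (regularLocus P R) :=
  (measurableSet_singleton (0 : E)).compl.inter
    ((measurableSet_lt hP.continuous.measurable measurable_const).inter
      (measurableSet_of_differentiableAt ℝ P))

variable {μ : Measure E} [μ.IsAddHaarMeasure]

lemma setIntegral_comp_radialPower (hP : IsLipschitzGauge P) (hR : 0 < R) (hlam : 0 < lam)
    (f : E → ℝ) :
    ∫ x in regularLocus P R,
        lam * f (radialPower P R lam x) / P x ^ Module.finrank ℝ E ∂μ =
      ∫ y in regularLocus P R, f y / P y ^ Module.finrank ℝ E ∂μ := by
  have hΦ := hP.bijOn_radialPower hR hlam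
  have h_cov := integral_image_eq_integral_abs_det_fderiv_smul μ hP.measurableSet_regularLocus
    (fun x hx ↦ (hP.differentiableAt_radialPower hR hx).hasFDerivAt.hasFDerivWithinAt) hΦ.injOn
    (fun y ↦ f y / P y ^ Module.finrank ℝ E)
  rw [hΦ.image_eq] at h_cov
  rw [h_cov]
  refine setIntegral_congr_fun hP.measurableSet_regularLocus fun x hx ↦ ?_
  have hg := hP.div_rpow_pos hR hx.1 (lam - 1)
  rw [smul_eq_mul, hP.det_fderiv_radialPower hR hx, abs_of_pos (by positivity),
    hP.map_radialPower hR hx.1, mul_pow]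
  field_simp

variable [Nontrivial E]

lemma ball_ae_eq_regularLocus (hP : IsLipschitzGauge P) :
    {x | P x < R} =ᵐ[μ] regularLocus P R := by
  obtain ⟨K, hK⟩ := hP.lipschitz
  filter_upwards [hK.ae_differentiableAt (μ := μ), μ.ae_ne 0] with x hxd hx0
  exact propext ⟨fun hxR ↦ ⟨hx0, hxR, hxd⟩, fun hx ↦ hx.2.1⟩

lemma setIntegral_div_eq_of_eq_mul_comp_radialPower (hP : IsLipschitzGauge P) (hR : 0 < R)
    (hlam : 0 < lam) {f g : E → ℝ}
    (hfg : ∀ x ∈ regularLocus P R, g x = lam * f (radialPower P R lam x)) :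
    ∫ x in {x | P x < R}, g x / P x ^ Module.finrank ℝ E ∂μ =
      ∫ y in {y | P y < R}, f y / P y ^ Module.finrank ℝ E ∂μ := by
  rw [setIntegral_congr_set hP.ball_ae_eq_regularLocus,
    setIntegral_congr_set hP.ball_ae_eq_regularLocus, ← hP.setIntegral_comp_radialPower hR hlam f]
  exact setIntegral_congr_fun hP.measurableSet_regularLocus fun x hx ↦ by rw [hfg x hx]

end IsLipschitzGauge

end ChangeOfVariables

section HardyScaling

variable {E F : Type*} [NormedAddCommGroup E] [NormedSpace ℝ E] [NormedAddCommGroup F]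
  [NormedSpace ℝ F] {P : E → ℝ} {R lam p : ℝ} {u : E → F} {x : E}

lemma rpow_neg_sub_one_div_mul_self (hlam : 0 < lam) (hp : p ≠ 0) :
    lam ^ (-((p - 1) / p)) * lam = lam ^ p⁻¹ := by
  rw [← Real.rpow_add_one hlam.ne']
  congr 1
  field_simp
  ring

namespace IsLipschitzGauge

lemma fderiv_hardyScaling_self (hP : IsLipschitzGauge P) (hR : 0 < R) (hlam : 0 < lam)
    (hp : p ≠ 0) (hx : x ∈ regularLocus P R)
    (hu : DifferentiableAt ℝ u (radialPower P R lam x)) :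
    fderiv ℝ (hardyScaling P R lam p u) x x =
      lam ^ p⁻¹ • fderiv ℝ u (radialPower P R lam x) (radialPower P R lam x) := by
  have hΦ := (hP.differentiableAt_radialPower (lam := lam) hR hx).hasFDerivAt
  have h_chain := (hu.hasFDerivAt.comp x hΦ).const_smul (lam ^ (-((p - 1) / p)))
  calc fderiv ℝ (hardyScaling P R lam p u) x x
      = lam ^ (-((p - 1) / p)) • fderiv ℝ u (radialPower P R lam x)
          (fderiv ℝ (radialPower P R lam) x x) := congr($(h_chain.fderiv) x)
    _ = lam ^ p⁻¹ • fderiv ℝ u (radialPower P R lam x) (radialPower P R lam x) := by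
      rw [hP.fderiv_radialPower_self hR hx, map_smul, smul_smul,
        rpow_neg_sub_one_div_mul_self hlam hp]

lemma norm_fderiv_hardyScaling_self_rpow (hP : IsLipschitzGauge P) (hR : 0 < R)
    (hlam : 0 < lam) (hp : p ≠ 0) (hx : x ∈ regularLocus P R)
    (hu : DifferentiableAt ℝ u (radialPower P R lam x)) :
    ‖fderiv ℝ (hardyScaling P R lam p u) x x‖ ^ p =
      lam * ‖fderiv ℝ u (radialPower P R lam x) (radialPower P R lam x)‖ ^ p := by
  rw [hP.fderiv_hardyScaling_self hR hlam hp hx hu, norm_smul, Real.norm_of_nonneg (by positivity),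
    Real.mul_rpow (by positivity) (norm_nonneg _), Real.rpow_inv_rpow hlam.le hp]

lemma norm_hardyScaling_div_log_rpow (hP : IsLipschitzGauge P) (hR : 0 < R) (hlam : 0 < lam)
    (hp : p ≠ 0) (hx : x ≠ 0) (hxR : P x < R) :
    ‖hardyScaling P R lam p u x‖ ^ p / Real.log (R / P x) ^ p =
      lam * (‖u (radialPower P R lam x)‖ ^ p / Real.log (R / P (radialPower P R lam x)) ^ p) := by
  have hlog : 0 < Real.log (R / P x) := Real.log_pos ((one_lt_div (hP.pos hx)).2 hxR)
  have hfactor : (lam ^ (-((p - 1) / p))) ^ p * lam ^ p = lam := by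
    rw [← Real.mul_rpow (by positivity) hlam.le, rpow_neg_sub_one_div_mul_self hlam hp,
      Real.rpow_inv_rpow hlam.le hp]
  rw [hP.log_div_map_radialPower hR hx, hardyScaling, norm_smul,
    Real.norm_of_nonneg (by positivity), Real.mul_rpow (by positivity) (norm_nonneg _),
    Real.mul_rpow hlam.le hlog.le]
  field_simp
  linear_combination ‖u (radialPower P R lam x)‖ ^ p * hfactor

end IsLipschitzGauge

end HardyScaling

lemma abs_inner_inv_smul_gradient_pow {E : Type*} [NormedAddCommGroup E]
    [InnerProductSpace ℝ E] [CompleteSpace E] (v : E → ℝ) (x : E) {r : ℝ} (hr : 0 ≤ r) (n : ℕ) :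
    |⟪r⁻¹ • x, gradient v x⟫| ^ n = |fderiv ℝ v x x| ^ n / r ^ n := by
  rw [inner_gradient_right, conj_trivial, map_smul, smul_eq_mul, abs_mul, abs_inv,
    abs_of_nonneg hr, mul_pow, inv_pow, div_eq_inv_mul]

theorem finsler_critical_hardy_scale_invariance_general
    {E F : Type*} [NormedAddCommGroup E] [NormedSpace ℝ E] [FiniteDimensional ℝ E] [Nontrivial E]
    [MeasurableSpace E] [BorelSpace E] (μ : Measure E) [μ.IsAddHaarMeasure]
    [NormedAddCommGroup F] [NormedSpace ℝ F] {P : E → ℝ} (hP : IsLipschitzGauge P)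
    {R lam p : ℝ} (hR : 0 < R) (hlam : 0 < lam) (hp : 0 < p) {u : E → F}
    (hu : ∀ y ≠ 0, P y < R → DifferentiableAt ℝ u y) :
    (∫ x in {x | P x < R},
          ‖fderiv ℝ (hardyScaling P R lam p u) x x‖ ^ p / P x ^ Module.finrank ℝ E ∂μ
        = ∫ y in {y | P y < R}, ‖fderiv ℝ u y y‖ ^ p / P y ^ Module.finrank ℝ E ∂μ) ∧
    (∫ x in {x | P x < R}, ‖hardyScaling P R lam p u x‖ ^ p /
          (P x ^ Module.finrank ℝ E * Real.log (R / P x) ^ p) ∂μ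
        = ∫ y in {y | P y < R}, ‖u y‖ ^ p /
          (P y ^ Module.finrank ℝ E * Real.log (R / P y) ^ p) ∂μ) := by
  constructor
  · refine hP.setIntegral_div_eq_of_eq_mul_comp_radialPower hR hlam fun x hx ↦ ?_
    have hΦx := hP.radialPower_mem_regularLocus hR hlam hx
    exact hP.norm_fderiv_hardyScaling_self_rpow hR hlam hp.ne' hx (hu _ hΦx.1 hΦx.2.1)
  · simp only [mul_comm (P _ ^ _), ← div_div]
    exact hP.setIntegral_div_eq_of_eq_mul_comp_radialPower hR hlam fun x hx ↦
      hP.norm_hardyScaling_div_log_rpow hR hlam hp.ne' hx.1 hx.2.1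

open scoped Classical in
/-- Scale invariance of the anisotropic critical Hardy inequality on the Wulff
ball W_R under the scaling u_λ(x) = λ^{-(N-1)/N} u((H⁰(x)/R)^{λ-1} x). -/
theorem finsler_critical_hardy_scale_invariance
    (N : ℕ) (hN : 2 ≤ N) (H : Euc N → ℝ) (hH : IsFinslerNorm H)
    (R : ℝ) (hR : 0 < R) (lam : ℝ) (hlam : 0 < lam)
    (WR : Set (Euc N)) (hWR : WR = {x : Euc N | polarNorm H x < R})
    (u : Euc N → ℝ) (hu : IsTestFun (WR \ {0}) u)
    (ulam : Euc N → ℝ)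
    (hulam : ∀ x : Euc N, ulam x = if x = 0 then 0 else
        lam ^ (-(((N : ℝ) - 1) / (N : ℝ))) * u ((polarNorm H x / R) ^ (lam - 1) • x)) :
    (∫ x in WR, |⟪(polarNorm H x)⁻¹ • x, gradient ulam x⟫| ^ N
        = ∫ y in WR, |⟪(polarNorm H y)⁻¹ • y, gradient u y⟫| ^ N) ∧
    (∫ x in WR, |ulam x| ^ N / (polarNorm H x ^ N * Real.log (R / polarNorm H x) ^ N)
        = ∫ y in WR, |u y| ^ N /
            (polarNorm H y ^ N * Real.log (R / polarNorm H y) ^ N)) := by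
  obtain ⟨a, _, ha, -, hbounds⟩ := hH.bounds
  have : Nontrivial (Fin N) := Fin.nontrivial_iff_two_le.2 hN
  have hP : IsLipschitzGauge (polarNorm H) := isLipschitzGauge_polarNorm ha fun ξ ↦ (hbounds ξ).1
  have hulam_eq : ulam = hardyScaling (polarNorm H) R lam N u := by
    funext x
    rw [hulam]
    split_ifs with hx
    · have hu0 : u 0 = 0 := image_eq_zero_of_notMem_tsupport fun h0 ↦ (hu.2.2 h0).2 rfl
      simp [hardyScaling, radialPower, hx, hu0]
    · rfl
  subst hWR hulam_eq
  simpa only [abs_inner_inv_smul_gradient_pow _ _ (hP.nonneg _), Real.rpow_natCast,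
    Real.norm_eq_abs, finrank_euclideanSpace, Fintype.card_fin] using
    finsler_critical_hardy_scale_invariance_general volume hP hR hlam (p := N) (by positivity)
      fun y _ _ ↦ hu.1.differentiable (by simp) y
end
end
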